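/- arXiv:2407.14610 — 3 statements merged into one kernel-verified Lean document; each statement's English description precedes it below -/
import Mathlib

section
/- Let G ⊆ Ĉ be a lemniscate graph with vertex set V, and let e be an edge of G, i.e. a connected component of G \ V. Then there exists a Jordan curve γ with e ⊆ γ ⊆ G. -/
open Set Metric Topology Filter Polynomial

noncomputable section

/-- A Jordan curve: a set homeomorphic to the unit circle. -/
def IsJordanCurve {X : Type*} [TopologicalSpace X] (E : Set X) : Prop :=
  Nonempty (E ≃ₜ (Metric.sphere (0 : ℂ) 1 : Set ℂ))

/-- A simple arc: a set homeomorphic to the open unit interval `(0,1)`. -/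
def IsSimpleArc {X : Type*} [TopologicalSpace X] (E : Set X) : Prop :=
  Nonempty (E ≃ₜ (Set.Ioo (0 : ℝ) 1 : Set ℝ))

/-- The connected components of a set. -/
def setComponents {X : Type*} [TopologicalSpace X] (A : Set X) : Set (Set X) :=
  {C | ∃ x ∈ A, C = connectedComponentIn A x}

/-- The edges of the pair `(G, V)`: the connected components of `G \ V`. -/
def graphEdges {X : Type*} [TopologicalSpace X] (G V : Set X) : Set (Set X) :=
  setComponents (G \ V)

/-- The degree of a vertex `v`: the number of edges `e` with `v ∈ closure e \ e`,
where an edge is counted twice if `closure e \ e = {v}`. -/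
def vertexDegree {X : Type*} [TopologicalSpace X] (G V : Set X) (v : X) : ℕ :=
  {e ∈ graphEdges G V | v ∈ closure e \ e}.ncard +
    {e ∈ graphEdges G V | closure e \ e = {v}}.ncard

/-- `G` is a lemniscate graph with (finite) vertex set `V`. -/
structure IsLemniscateGraphWith {X : Type*} [TopologicalSpace X] (G V : Set X) : Prop where
  vertex_subset : V ⊆ G
  vertex_finite : V.Finite
  edges_finite : (graphEdges G V).Finite
  edge_shape : ∀ e ∈ graphEdges G V, IsJordanCurve e ∨ (IsSimpleArc e ∧ closure e \ e ⊆ V)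
  degree_even : ∀ v ∈ V, Even (vertexDegree G V v)
  degree_ge_four : ∀ v ∈ V, 4 ≤ vertexDegree G V v

/-- `G` is a lemniscate graph (for some finite vertex set). -/
def IsLemniscateGraph {X : Type*} [TopologicalSpace X] (G : Set X) : Prop :=
  ∃ V, IsLemniscateGraphWith G V

/-- The faces of `G`: the connected components of the complement of `G`. -/
def graphFaces {X : Type*} [TopologicalSpace X] (G : Set X) : Set (Set X) :=
  setComponents Gᶜ

/-- A 2-coloring of the faces of `G`, recorded by the set `grey` of grey faces:
two distinct faces whose closures share a common edge get different colors. -/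
def IsTwoColoring {X : Type*} [TopologicalSpace X] (G V : Set X) (grey : Set (Set X)) : Prop :=
  grey ⊆ graphFaces G ∧
    ∀ F₁ ∈ graphFaces G, ∀ F₂ ∈ graphFaces G, F₁ ≠ F₂ →
      (∃ e ∈ graphEdges G V, e ⊆ closure F₁ ∧ e ⊆ closure F₂) →
      (F₁ ∈ grey ↔ F₂ ∉ grey)

/-- The distance function of a metric space structure on the Riemann sphere. -/
def mdist (m : MetricSpace (OnePoint ℂ)) : OnePoint ℂ → OnePoint ℂ → ℝ :=
  m.toPseudoMetricSpace.toDist.dist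

/-- The metric space structure `m` induces the standard topology of the Riemann sphere. -/
def InducesSphereTopology (m : MetricSpace (OnePoint ℂ)) : Prop :=
  m.toPseudoMetricSpace.toUniformSpace.toTopologicalSpace =
    (inferInstance : TopologicalSpace (OnePoint ℂ))

/-- `E` and `F` are `ε`-homeomorphic with respect to the metric `m`: there is a
homeomorphism of the sphere carrying `E` to `F` and moving points less than `ε`. -/
def EpsHomeomorphic (m : MetricSpace (OnePoint ℂ)) (ε : ℝ) (E F : Set (OnePoint ℂ)) : Prop :=
  ∃ φ : OnePoint ℂ ≃ₜ OnePoint ℂ, φ '' E = F ∧ ∃ c < ε, ∀ z, mdist m (φ z) z ≤ c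

/-- `r` is a rational map on the Riemann sphere: the continuous extension of `p/q`
for coprime polynomials `p`, `q`, not both constant. -/
def IsRationalMap (r : OnePoint ℂ → OnePoint ℂ) : Prop :=
  Continuous r ∧ ∃ p q : ℂ[X], IsCoprime p q ∧ ¬(p.natDegree = 0 ∧ q.natDegree = 0) ∧
    ∀ z : ℂ, q.eval z ≠ 0 → r (z : OnePoint ℂ) = ((p.eval z / q.eval z : ℂ) : OnePoint ℂ)

/-- The lemniscate of `r` : the preimage of the unit circle. -/
def lemniscate (r : OnePoint ℂ → OnePoint ℂ) : Set (OnePoint ℂ) :=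
  r ⁻¹' ((fun w : ℂ => (w : OnePoint ℂ)) '' {w : ℂ | ‖w‖ = 1})

/-- The copy of a planar set inside the Riemann sphere. -/
def toSphere (s : Set ℂ) : Set (OnePoint ℂ) := (fun z : ℂ => (z : OnePoint ℂ)) '' s

/-!
Let `a` and `b` be the two ends of `e`. If they coincide, the closure of `e` is a Jordan curve.
Otherwise it suffices to join `b` to `a` by an arc in `G \ e`, since this arc closes `e` up to
a Jordan curve. Let `S` be the set of vertices that can be joined to `a` by an arc in `G \ e`.
Every other edge has both or none of its ends in `S`, while the number of edge ends in `S` is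
a sum of degrees, hence even. So `e` has an even number of ends in `S`, and as `a` is one of them,
so is `b`.

An edge which is only known to be homeomorphic to `(0, 1)` has two ends in this sense because all
cluster points of its parametrization at `0` and at `1` are vertices. There are finitely many of
them, and since the one-sided neighbourhoods of `0` and `1` are connected, there is only one
at each side.
-/

section Paths

variable {X : Type*} [TopologicalSpace X] {x y z : X}

theorem injOn_of_lt_imp_ne {α β : Type*} [LinearOrder α] {f : α → β} {s : Set α}
    (h : ∀ a ∈ s, ∀ b ∈ s, a < b → f a ≠ f b) : InjOn f s :=
  injOn_iff_injective.2 (.of_lt_imp_ne fun a b ↦ h a a.2 b b.2)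

theorem range_path_eq_image_Ioo_union (p : Path x y) : range p = p '' Ioo 0 1 ∪ {x, y} := by
  have hI : (univ : Set unitInterval) = Ioo 0 1 ∪ {0, 1} := by
    rw [Ioo_union_both zero_le_one]
    exact Icc_bot_top.symm
  rw [← image_univ, hI, image_union, image_pair, p.source, p.target]

theorem isJordanCurve_range_of_injOn_Iio [T2Space X] {p : Path x x} (hp : InjOn p (Iio 1)) :
    IsJordanCurve (range p) := by
  have : Fact ((0 : ℝ) < 1) := ⟨one_pos⟩
  let g : AddCircle (1 : ℝ) → X := AddCircle.liftIco 1 0 p.extend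
  have hg : Continuous g :=
    AddCircle.liftIco_zero_continuous (by simp) p.continuous_extend.continuousOn
  have hinj : Function.Injective g := by
    refine Function.Injective.comp (injOn_iff_injective.1 fun s hs t ht hst ↦ ?_)
      (AddCircle.equivIco 1 0).injective
    rw [zero_add] at hs ht
    rw [p.extend_apply ⟨hs.1, hs.2.le⟩, p.extend_apply ⟨ht.1, ht.2.le⟩] at hst
    exact congrArg Subtype.val (hp hs.2 ht.2 hst)
  have hrange : range g = range p := by
    have hends : p.extend 1 ∈ p.extend '' Ico 0 1 := ⟨0, by simp, by simp⟩
    calc range g = p.extend '' Ico 0 1 := by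
          simp only [g, AddCircle.liftIco]
          rw [(AddCircle.equivIco (1 : ℝ) 0).surjective.range_comp, range_domRestrict, zero_add]
      _ = p.extend '' Icc 0 1 := by
          rw [← Ico_insert_right zero_le_one, image_insert_eq, insert_eq_of_mem hends]
      _ = range p := p.image_extend_of_subset Subset.rfl
  rw [← hrange]
  exact ⟨(hg.isClosedEmbedding hinj).isEmbedding.toHomeomorph.symm.trans
    (AddCircle.homeomorphCircle one_ne_zero)⟩

theorem exists_eq_of_trans_eq {p : Path x y} {q : Path y z} (hp : Function.Injective p)
    (hq : Function.Injective q) {s t : unitInterval} (hst : s < t)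
    (h : p.trans q s = p.trans q t) : ∃ a b, p a = q b ∧ b ≠ 0 ∧ (b = 1 → t = 1) := by
  have hlt : (s : ℝ) < t := hst
  rw [Path.trans_apply, Path.trans_apply] at h
  split_ifs at h with hs ht ht
  · have := congrArg Subtype.val (hp h)
    dsimp only at this
    linarith
  · refine ⟨_, _, h, fun h0 ↦ ?_, fun h1 ↦ Subtype.ext ?_⟩
    · have : 2 * (t : ℝ) - 1 = 0 := congrArg Subtype.val h0
      linarith
    · have : 2 * (t : ℝ) - 1 = 1 := congrArg Subtype.val h1
      change (t : ℝ) = 1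
      linarith
  · linarith
  · have := congrArg Subtype.val (hq h)
    dsimp only at this
    linarith

theorem injective_path_trans {p : Path x y} {q : Path y z} (hp : Function.Injective p)
    (hq : Function.Injective q) (hpq : range p ∩ range q ⊆ {y}) :
    Function.Injective (p.trans q) := by
  refine Function.Injective.of_lt_imp_ne fun s t hst h ↦ ?_
  obtain ⟨a, b, hab, hb, -⟩ := exists_eq_of_trans_eq hp hq hst h
  have hy : q b = y := hpq ⟨⟨a, hab⟩, ⟨b, rfl⟩⟩
  exact hb (hq (hy.trans q.source.symm))

theorem isJordanCurve_range_union_range [T2Space X] {p : Path x y} {q : Path y x}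
    (hp : Function.Injective p) (hq : Function.Injective q) (hpq : range p ∩ range q ⊆ {x, y}) :
    IsJordanCurve (range p ∪ range q) := by
  rw [← Path.trans_range]
  refine isJordanCurve_range_of_injOn_Iio (injOn_of_lt_imp_ne fun s _ t ht hst h ↦ ?_)
  obtain ⟨a, b, hab, hb, hb'⟩ := exists_eq_of_trans_eq hp hq hst h
  rcases hpq ⟨⟨a, hab⟩, ⟨b, rfl⟩⟩ with hx | hy
  · exact (ne_of_lt ht) (hb' (hq (hx.trans q.target.symm)))
  · exact hb (hq (hy.trans q.source.symm))

end Paths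

section Arcs

variable {X : Type*} [TopologicalSpace X] {x y z : X} {A B : Set X}

/-- Two points are joined by an arc in `A` if they coincide or are the ends of an injective path
in `A`. Allowing equality without asking the point to lie in `A` makes this relation reflexive
and, in Hausdorff spaces, transitive. -/
def ArcJoinedIn (A : Set X) (x y : X) : Prop :=
  x = y ∨ ∃ p : Path x y, Function.Injective p ∧ range p ⊆ A

theorem convexComb_injective {a b : ℝ} {s t : Icc a b} (hst : s ≠ t) :
    Function.Injective (Icc.convexComb s t) := by
  intro c d hcd
  have h : (1 - c : ℝ) * s + c * t = (1 - d) * s + d * t := congrArg Subtype.val hcd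
  have hts : (t - s : ℝ) ≠ 0 := sub_ne_zero.2 fun h ↦ hst (Subtype.ext h.symm)
  exact Subtype.ext (mul_right_cancel₀ hts (by linarith))

namespace ArcJoinedIn

theorem refl (A : Set X) (x : X) : ArcJoinedIn A x x := .inl rfl

theorem symm (h : ArcJoinedIn A x y) : ArcJoinedIn A y x := by
  rcases h with rfl | ⟨p, hp, hpA⟩
  · exact refl A x
  · exact .inr ⟨p.symm, hp.comp unitInterval.symm_bijective.injective, by rwa [Path.symm_range]⟩

theorem mono (h : ArcJoinedIn A x y) (hAB : A ⊆ B) : ArcJoinedIn B x y :=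
  h.imp_right fun ⟨p, hp, hpA⟩ ↦ ⟨p, hp, hpA.trans hAB⟩

theorem union (hxy : ArcJoinedIn A x y) (hyz : ArcJoinedIn B y z) (hAB : A ∩ B ⊆ {y}) :
    ArcJoinedIn (A ∪ B) x z := by
  rcases hxy with rfl | ⟨p, hp, hpA⟩
  · exact hyz.mono subset_union_right
  rcases hyz with rfl | ⟨q, hq, hqB⟩
  · exact .inr ⟨p, hp, hpA.trans subset_union_left⟩
  refine .inr ⟨p.trans q, injective_path_trans hp hq ((inter_subset_inter hpA hqB).trans hAB), ?_⟩
  rw [Path.trans_range]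
  exact union_subset_union hpA hqB

theorem image_uIcc {p : Path x y} (hp : Function.Injective p) (s t : unitInterval) :
    ArcJoinedIn (p '' uIcc s t) (p s) (p t) := by
  refine (eq_or_ne s t).imp (congrArg p) fun hst ↦
    ⟨p.subpath s t, hp.comp (convexComb_injective hst), (p.range_subpath s t).subset⟩

-- Follow the first arc until it hits the second one, then follow the second one.
theorem trans [T2Space X] (hxy : ArcJoinedIn A x y) (hyz : ArcJoinedIn A y z) :
    ArcJoinedIn A x z := by
  rcases hxy with rfl | ⟨p, hp, hpA⟩
  · exact hyz
  rcases hyz with rfl | ⟨q, hq, hqA⟩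
  · exact .inr ⟨p, hp, hpA⟩
  have hclosed : IsClosed (p ⁻¹' range q) :=
    (isCompact_range q.continuous).isClosed.preimage p.continuous
  obtain ⟨t, ⟨s, hs⟩, ht⟩ : ∃ t, IsLeast (p ⁻¹' range q) t :=
    hclosed.isCompact.exists_isLeast ⟨1, by simp⟩
  have hpt : ArcJoinedIn (p '' Icc 0 t) x (p t) := by
    simpa using image_uIcc hp 0 t
  have hqs : ArcJoinedIn (q '' Icc s 1) (p t) z := by
    simpa [hs, unitInterval.le_one'] using image_uIcc hq s 1
  refine (hpt.union hqs ?_).mono (union_subset ?_ ?_)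
  · rintro _ ⟨⟨r, hr, rfl⟩, r', -, hr'⟩
    rw [hr.2.antisymm (ht ⟨r', hr'⟩), mem_singleton_iff]
  · exact (image_subset_range _ _).trans hpA
  · exact (image_subset_range _ _).trans hqA

end ArcJoinedIn

end Arcs

section EndsOfArcs

variable {X Y : Type*} [TopologicalSpace X] [TopologicalSpace Y]

/-- A filter has small preconnected sets if its preconnected members form a basis. This holds for
the one-sided neighbourhoods of a point of the line, and it is what forces the ends of an arc to
converge. -/
def HasSmallPreconnectedSets (L : Filter X) : Prop :=
  ∀ s ∈ L, ∃ t ∈ L, t ⊆ s ∧ IsPreconnected t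

theorem hasSmallPreconnectedSets_nhdsGT (a : ℝ) : HasSmallPreconnectedSets (𝓝[>] a) := by
  intro s hs
  obtain ⟨b, hab, hbs⟩ := (nhdsGT_basis a).mem_iff.1 hs
  exact ⟨Ioo a b, Ioo_mem_nhdsGT hab, hbs, isPreconnected_Ioo⟩

theorem hasSmallPreconnectedSets_nhdsLT (a : ℝ) : HasSmallPreconnectedSets (𝓝[<] a) := by
  intro s hs
  obtain ⟨b, hba, hbs⟩ := (nhdsLT_basis a).mem_iff.1 hs
  exact ⟨Ioo b a, Ioo_mem_nhdsLT hba, hbs, isPreconnected_Ioo⟩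

namespace HasSmallPreconnectedSets

theorem map {L : Filter Y} (hL : HasSmallPreconnectedSets L) {f : Y → X} (hf : Continuous f) :
    HasSmallPreconnectedSets (L.map f) := by
  intro s hs
  obtain ⟨t, htL, hts, ht⟩ := hL _ hs
  exact ⟨f '' t, image_mem_map htL, image_subset_iff.2 hts, ht.image f hf.continuousOn⟩

theorem comap {L : Filter X} (hL : HasSmallPreconnectedSets L) {f : Y → X} (hf : IsInducing f)
    (hfL : range f ∈ L) : HasSmallPreconnectedSets (L.comap f) := by
  rintro s ⟨s', hs'L, hs's⟩
  obtain ⟨t, htL, hts, ht⟩ := hL _ (inter_mem hs'L hfL)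
  refine ⟨f ⁻¹' t, preimage_mem_comap htL, fun y hy ↦ hs's (hts hy).1, ?_⟩
  rwa [← hf.isPreconnected_image, image_preimage_eq_of_subset fun x hx ↦ (hts hx).2]

-- Two disjoint open sets cover the cluster points, one containing `a` and the other one the rest,
-- so that a preconnected member of the filter lying in their union lies in one of them.
theorem exists_le_nhds [T2Space X] {L : Filter X} [L.NeBot] (hL : HasSmallPreconnectedSets L)
    {K : Set X} (hK : IsCompact K) (hKL : K ∈ L) (hfin : {x | ClusterPt x L}.Finite) :
    ∃ a, L ≤ 𝓝 a := by
  obtain ⟨a, -, ha⟩ := hK.exists_clusterPt (le_principal_iff.2 hKL)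
  refine ⟨a, hK.le_nhds_of_unique_clusterPt hKL fun b _ hb ↦ ?_⟩
  by_contra hba
  obtain ⟨U, W, hU, hW, haU, hWU, hUW⟩ : SeparatedNhds {a} ({x | ClusterPt x L} \ {a}) :=
    SeparatedNhds.of_isCompact_isCompact isCompact_singleton
      (hfin.subset sdiff_subset).isCompact disjoint_sdiff_right
  have hcover : U ∪ W ∈ L := by
    refine hK.adherence_nhdset (le_principal_iff.2 hKL) (hU.union hW) fun c _ hc ↦ ?_
    rcases eq_or_ne c a with rfl | hca
    · exact .inl (haU rfl)
    · exact .inr (hWU ⟨hc, hca⟩)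
  obtain ⟨t, htL, htUW, ht⟩ := hL _ hcover
  have hmeets : ∀ {c O}, ClusterPt c L → IsOpen O → c ∈ O → (t ∩ O).Nonempty :=
    fun {c O} hc hO hcO ↦ inter_comm O t ▸ clusterPt_iff_nonempty.1 hc (hO.mem_nhds hcO) htL
  have htU : t ⊆ U := ht.subset_left_of_subset_union hU hW hUW htUW (hmeets ha hU (haU rfl))
  obtain ⟨y, hyt, hyW⟩ := hmeets hb hW (hWU ⟨hb, hba⟩)
  exact hUW.le_bot ⟨htU hyt, hyW⟩

end HasSmallPreconnectedSets

theorem notMem_range_of_mapClusterPt {h : Y → X} (hh : IsInducing h) {L : Filter Y}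
    (hL : ∀ y, Disjoint (𝓝 y) L) {x : X} (hx : MapClusterPt x L h) : x ∉ range h := by
  rintro ⟨y, rfl⟩
  have hbot : 𝓝 (h y) ⊓ map h L = ⊥ := by
    rw [← Filter.push_pull', ← hh.nhds_eq_comap, (hL y).eq_bot, Filter.map_bot]
  exact hx.neBot.ne hbot

theorem exists_tendsto_of_finite_closure_sdiff_range [T2Space X] {h : Y → X} (hh : IsInducing h)
    (hc : IsCompact (closure (range h))) (hfin : (closure (range h) \ range h).Finite)
    {L : Filter Y} [L.NeBot] (hL : HasSmallPreconnectedSets L) (hleave : ∀ y, Disjoint (𝓝 y) L) :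
    ∃ a ∈ closure (range h) \ range h, Tendsto h L (𝓝 a) := by
  have hrange : range h ∈ map h L := range_mem_map
  have hcluster : ∀ x, MapClusterPt x L h → x ∈ closure (range h) \ range h := fun x hx ↦
    ⟨clusterPt_iff_forall_mem_closure.1 hx _ hrange, notMem_range_of_mapClusterPt hh hleave hx⟩
  obtain ⟨a, ha⟩ := (hL.map hh.continuous).exists_le_nhds hc
    (mem_of_superset hrange subset_closure) (hfin.subset hcluster)
  exact ⟨a, hcluster a (Tendsto.mapClusterPt ha), ha⟩

theorem continuousOn_Icc_update_update {f : ℝ → X} {x y : X} (hf : ContinuousOn f (Ioo 0 1))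
    (hx : Tendsto f (𝓝[>] 0) (𝓝 x)) (hy : Tendsto f (𝓝[<] 1) (𝓝 y)) :
    ContinuousOn (Function.update (Function.update f 0 x) 1 y) (Icc 0 1) := by
  have hIco : ContinuousOn (Function.update f 0 x) (Ico 0 1) := by
    rw [continuousOn_update_iff, Ico_sdiff_left, nhdsWithin_Ioo_eq_nhdsGT one_pos]
    exact ⟨hf, fun _ ↦ hx⟩
  rw [continuousOn_update_iff, Icc_sdiff_right, nhdsWithin_Ico_eq_nhdsLT one_pos]
  refine ⟨hIco, fun _ ↦ hy.congr' ?_⟩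
  filter_upwards [Ioo_mem_nhdsLT one_pos] with t ht
  exact (Function.update_of_ne ht.1.ne' x f).symm

theorem exists_path_extending_Ioo {h : Ioo (0 : ℝ) 1 → X} (hh : Continuous h) {x y : X}
    (hx : Tendsto h atBot (𝓝 x)) (hy : Tendsto h atTop (𝓝 y)) :
    ∃ p : Path x y, ∀ t : Ioo (0 : ℝ) 1, p ⟨t, Ioo_subset_Icc_self t.2⟩ = h t := by
  let f : ℝ → X := Function.extend Subtype.val h fun _ ↦ x
  have hfh : f ∘ Subtype.val = h := Function.extend_comp Subtype.val_injective h _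
  have hf : ContinuousOn f (Ioo 0 1) := by
    rwa [continuousOn_iff_continuous_domRestrict, domRestrict_eq, hfh]
  have hfx : Tendsto f (𝓝[>] 0) (𝓝 x) := by
    rwa [← map_coe_Ioo_atBot one_pos, tendsto_map'_iff, hfh]
  have hfy : Tendsto f (𝓝[<] 1) (𝓝 y) := by
    rwa [← map_coe_Ioo_atTop one_pos, tendsto_map'_iff, hfh]
  let p : Path x y :=
    { toFun := fun t ↦ Function.update (Function.update f 0 x) 1 y t
      continuous_toFun := continuousOn_iff_continuous_domRestrict.1
        (continuousOn_Icc_update_update hf hfx hfy)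
      source' := by simp
      target' := by simp }
  refine ⟨p, fun t ↦ ?_⟩
  calc p ⟨t, Ioo_subset_Icc_self t.2⟩ = Function.update f 0 x t :=
        Function.update_of_ne t.2.2.ne _ _
    _ = f t := Function.update_of_ne t.2.1.ne' _ _
    _ = h t := congrFun hfh t

theorem eq_zero_and_eq_one_of_path_eq {x y : X} {p : Path x y} {e : Set X}
    (hp : BijOn p (Ioo 0 1) e) (hx : x ∉ e) (hy : y ∉ e) {s t : unitInterval} (hst : s < t)
    (h : p s = p t) : s = 0 ∧ t = 1 := by
  have hs : s = 0 := by
    by_contra hs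
    have hsI : s ∈ Ioo 0 1 := ⟨unitInterval.pos_iff_ne_zero.2 hs, hst.trans_le t.2.2⟩
    have htI : t ∈ Ioo 0 1 := by
      refine ⟨hsI.1.trans hst, unitInterval.lt_one_iff_ne_one.2 ?_⟩
      rintro rfl
      exact hy (p.target ▸ h ▸ hp.mapsTo hsI)
    exact hst.ne (hp.injOn hsI htI h)
  subst hs
  refine ⟨rfl, by_contra fun ht ↦ hx ?_⟩
  rw [← p.source, h]
  exact hp.mapsTo ⟨hst, unitInterval.lt_one_iff_ne_one.2 ht⟩

theorem injective_of_bijOn_Ioo {x y : X} {p : Path x y} {e : Set X} (hp : BijOn p (Ioo 0 1) e)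
    (hx : x ∉ e) (hy : y ∉ e) (hxy : x ≠ y) : Function.Injective p := by
  refine Function.Injective.of_lt_imp_ne fun s t hst h ↦ hxy ?_
  obtain ⟨rfl, rfl⟩ := eq_zero_and_eq_one_of_path_eq hp hx hy hst h
  rwa [p.source, p.target] at h

theorem injOn_Iio_of_bijOn_Ioo {x : X} {p : Path x x} {e : Set X} (hp : BijOn p (Ioo 0 1) e)
    (hx : x ∉ e) : InjOn p (Iio 1) :=
  injOn_of_lt_imp_ne fun _ _ _ ht hst h ↦
    (ne_of_lt ht) (eq_zero_and_eq_one_of_path_eq hp hx hx hst h).2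

theorem IsSimpleArc.exists_path_bijOn [T2Space X] {e : Set X} (he : IsSimpleArc e)
    (hc : IsCompact (closure e)) (hfin : (closure e \ e).Finite) :
    ∃ (u v : X) (p : Path u v), u ∉ e ∧ v ∉ e ∧ BijOn p (Ioo 0 1) e := by
  obtain ⟨φ⟩ := he
  let h : Ioo (0 : ℝ) 1 → X := Subtype.val ∘ φ.symm
  have hh : IsEmbedding h := IsEmbedding.subtypeVal.comp φ.symm.isEmbedding
  have hrange : range h = e := by rw [φ.symm.surjective.range_comp, Subtype.range_coe]
  have hne : Nonempty (Ioo (0 : ℝ) 1) := nonempty_Ioo_subtype one_pos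
  have hbot : HasSmallPreconnectedSets (atBot : Filter (Ioo (0 : ℝ) 1)) := by
    rw [← comap_coe_Ioo_nhdsGT]
    exact (hasSmallPreconnectedSets_nhdsGT 0).comap IsInducing.subtypeVal
      (by rw [Subtype.range_coe]; exact Ioo_mem_nhdsGT one_pos)
  have htop : HasSmallPreconnectedSets (atTop : Filter (Ioo (0 : ℝ) 1)) := by
    rw [← comap_coe_Ioo_nhdsLT]
    exact (hasSmallPreconnectedSets_nhdsLT 1).comap IsInducing.subtypeVal
      (by rw [Subtype.range_coe]; exact Ioo_mem_nhdsLT one_pos)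
  rw [← hrange] at hc hfin ⊢
  obtain ⟨u, hu, hlimu⟩ := exists_tendsto_of_finite_closure_sdiff_range hh.isInducing hc hfin
    hbot disjoint_nhds_atBot
  obtain ⟨v, hv, hlimv⟩ := exists_tendsto_of_finite_closure_sdiff_range hh.isInducing hc hfin
    htop disjoint_nhds_atTop
  obtain ⟨p, hp⟩ := exists_path_extending_Ioo hh.continuous hlimu hlimv
  refine ⟨u, v, p, hu.2, hv.2, fun t ht ↦ ⟨⟨t, ht⟩, (hp ⟨t, ht⟩).symm⟩, fun s hs t ht hst ↦ ?_, ?_⟩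
  · have hst' : h ⟨s, hs⟩ = h ⟨t, ht⟩ := by rw [← hp ⟨s, hs⟩, ← hp ⟨t, ht⟩]; exact hst
    exact Subtype.ext (Subtype.mk.inj (hh.injective hst'))
  · rintro _ ⟨t, rfl⟩
    exact ⟨⟨t, Ioo_subset_Icc_self t.2⟩, t.2, hp t⟩

theorem range_eq_closure_of_bijOn_Ioo [T2Space X] {u v : X} {p : Path u v} {e : Set X}
    (hp : BijOn p (Ioo 0 1) e) : range p = closure e := by
  have hI : closure (Ioo (0 : unitInterval) 1) = univ :=
    (closure_Ioo zero_ne_one).trans Icc_bot_top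
  refine Subset.antisymm ?_ (closure_minimal ?_ (isCompact_range p.continuous).isClosed)
  · rw [← hp.image_eq, ← image_univ, ← hI]
    exact image_closure_subset_closure_image p.continuous
  · rw [← hp.image_eq]
    exact image_subset_range _ _

theorem closure_sdiff_eq_pair_of_bijOn_Ioo [T2Space X] {u v : X} {p : Path u v} {e : Set X}
    (hp : BijOn p (Ioo 0 1) e) (hu : u ∉ e) (hv : v ∉ e) : closure e \ e = {u, v} := by
  rw [← range_eq_closure_of_bijOn_Ioo hp, range_path_eq_image_Ioo_union, hp.image_eq,
    union_sdiff_left, sdiff_eq_left, disjoint_left]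
  rintro x (rfl | rfl)
  · exact hu
  · exact hv

end EndsOfArcs

section Components

variable {X : Type*} [TopologicalSpace X] {A C D : Set X}

theorem subset_of_mem_setComponents (hC : C ∈ setComponents A) : C ⊆ A := by
  obtain ⟨x, -, rfl⟩ := hC
  exact connectedComponentIn_subset A x

theorem closure_inter_subset_of_mem_setComponents (hC : C ∈ setComponents A) :
    closure C ∩ A ⊆ C := by
  obtain ⟨x, hx, rfl⟩ := hC
  have hself : x ∈ connectedComponentIn A x := mem_connectedComponentIn hx
  refine IsPreconnected.subset_connectedComponentIn ?_ ⟨subset_closure hself, hx⟩ inter_subset_right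
  exact isPreconnected_connectedComponentIn.subset_closure
    (subset_inter subset_closure (connectedComponentIn_subset A x)) inter_subset_left

theorem disjoint_of_mem_setComponents (hC : C ∈ setComponents A) (hD : D ∈ setComponents A)
    (hCD : C ≠ D) : Disjoint C D := by
  obtain ⟨x, -, rfl⟩ := hC
  obtain ⟨y, -, rfl⟩ := hD
  refine disjoint_left.2 fun z hzx hzy ↦ hCD ?_
  rw [connectedComponentIn_eq hzx, connectedComponentIn_eq hzy]

end Components

section Degrees

variable {X : Type*} [TopologicalSpace X] {G V e : Set X}

open scoped Classical in
/-- The contribution of the edge `e` to the degree of the vertex `v`: the number of ends of `e`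
at `v`. As in `vertexDegree`, both ends are at `v` exactly when `closure e \ e = {v}`. -/
def endMultiplicity (e : Set X) (v : X) : ℕ :=
  (if v ∈ closure e \ e then 1 else 0) + if closure e \ e = {v} then 1 else 0

theorem vertexDegree_eq_sum_endMultiplicity (hE : (graphEdges G V).Finite) (v : X) :
    vertexDegree G V v = ∑ e ∈ hE.toFinset, endMultiplicity e v := by
  classical
  have hcount (P : Set X → Prop) [DecidablePred P] :
      {e ∈ graphEdges G V | P e}.ncard = ∑ e ∈ hE.toFinset, if P e then 1 else 0 := by
    rw [Finset.sum_boole, Nat.cast_id, ← ncard_coe_finset]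
    simp
  simp only [vertexDegree, endMultiplicity, Finset.sum_add_distrib, hcount]

theorem endMultiplicity_eq_zero (he : IsClosed e) (v : X) : endMultiplicity e v = 0 := by
  have hempty : closure e \ e = ∅ := by rw [he.closure_eq, sdiff_self]
  simp only [endMultiplicity, hempty, mem_empty_iff_false, (singleton_ne_empty v).symm, if_false]

theorem endMultiplicity_eq_add [DecidableEq X] {a b : X} (h : closure e \ e = {a, b}) (v : X) :
    endMultiplicity e v = (if v = a then 1 else 0) + if v = b then 1 else 0 := by
  have hpair : ({a, b} : Set X) = {v} ↔ v = a ∧ v = b := by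
    simp only [eq_singleton_iff_unique_mem, mem_insert_iff, mem_singleton_iff, forall_eq_or_imp,
      forall_eq]
    grind
  simp only [endMultiplicity, h, hpair, mem_insert_iff, mem_singleton_iff]
  grind

theorem even_sum_endMultiplicity_iff {a b : X} (h : closure e \ e = {a, b}) (S : Finset X) :
    Even (∑ v ∈ S, endMultiplicity e v) ↔ (a ∈ S ↔ b ∈ S) := by
  classical
  simp only [endMultiplicity_eq_add h, Finset.sum_add_distrib, Finset.sum_ite_eq']
  split_ifs <;> simp_all

-- Handshake: the number of edge ends in `S` is the sum of the degrees over `S`.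
theorem even_sum_endMultiplicity_of_forall_ne (hE : (graphEdges G V).Finite)
    (he : e ∈ graphEdges G V) {S : Finset X} (hS : ∀ v ∈ S, Even (vertexDegree G V v))
    (hne : ∀ e' ∈ graphEdges G V, e' ≠ e → Even (∑ v ∈ S, endMultiplicity e' v)) :
    Even (∑ v ∈ S, endMultiplicity e v) := by
  classical
  have hsum : Even (∑ e' ∈ hE.toFinset, ∑ v ∈ S, endMultiplicity e' v) := by
    rw [Finset.sum_comm]
    refine Finset.even_sum _ fun v hv ↦ ?_
    rw [← vertexDegree_eq_sum_endMultiplicity hE]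
    exact hS v hv
  rw [← Finset.add_sum_erase _ _ (hE.mem_toFinset.2 he), Nat.even_add] at hsum
  refine hsum.2 (Finset.even_sum _ fun e' he' ↦ ?_)
  rw [Finset.mem_erase, hE.mem_toFinset] at he'
  exact hne e' he'.2 he'.1

end Degrees

section Graphs

variable {X : Type*} [TopologicalSpace X] {G V e e' : Set X}

theorem IsJordanCurve.isCompact (he : IsJordanCurve e) : IsCompact e := by
  obtain ⟨φ⟩ := he
  have : CompactSpace e := φ.symm.compactSpace
  exact isCompact_iff_compactSpace.2 this

/-- `G` is a compact graph with finite vertex set `V`: finitely many edges, each of which is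
a Jordan curve or a simple arc. In a Hausdorff space the ends of the edges are then in `V`. -/
structure IsCompactGraphWith (G V : Set X) : Prop where
  isCompact : IsCompact G
  vertex_finite : V.Finite
  edges_finite : (graphEdges G V).Finite
  edge_shape : ∀ e ∈ graphEdges G V, IsJordanCurve e ∨ IsSimpleArc e

namespace IsCompactGraphWith

variable [T2Space X]

theorem closure_edge_subset (hG : IsCompactGraphWith G V) (he : e ∈ graphEdges G V) :
    closure e ⊆ G :=
  closure_minimal ((subset_of_mem_setComponents he).trans sdiff_subset) hG.isCompact.isClosed

theorem closure_edge_sdiff_subset (hG : IsCompactGraphWith G V) (he : e ∈ graphEdges G V) :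
    closure e \ e ⊆ V := fun _ hx ↦ by_contra fun hxV ↦
  hx.2 (closure_inter_subset_of_mem_setComponents he ⟨hx.1, hG.closure_edge_subset he hx.1, hxV⟩)

theorem closure_edge_subset_sdiff (hG : IsCompactGraphWith G V) (he : e ∈ graphEdges G V)
    (he' : e' ∈ graphEdges G V) (hne : e' ≠ e) : closure e' ⊆ G \ e := by
  refine fun x hx ↦ ⟨hG.closure_edge_subset he' hx, fun hxe ↦ ?_⟩
  have hxe' : x ∈ e' := closure_inter_subset_of_mem_setComponents he'
    ⟨hx, subset_of_mem_setComponents he hxe⟩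
  exact (disjoint_of_mem_setComponents he' he hne).le_bot ⟨hxe', hxe⟩

theorem exists_path_bijOn (hG : IsCompactGraphWith G V) (he : e ∈ graphEdges G V)
    (harc : IsSimpleArc e) :
    ∃ (a b : X) (p : Path a b), a ∉ e ∧ b ∉ e ∧ BijOn p (Ioo 0 1) e :=
  harc.exists_path_bijOn (hG.isCompact.of_isClosed_subset isClosed_closure
    (hG.closure_edge_subset he)) (hG.vertex_finite.subset (hG.closure_edge_sdiff_subset he))

theorem isClosed_or_exists_ends (hG : IsCompactGraphWith G V) (he : e ∈ graphEdges G V) :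
    IsClosed e ∨ ∃ a b, closure e \ e = {a, b} ∧ ArcJoinedIn (closure e) a b := by
  rcases hG.edge_shape e he with hcurve | harc
  · exact .inl hcurve.isCompact.isClosed
  obtain ⟨a, b, p, ha, hb, hp⟩ := hG.exists_path_bijOn he harc
  refine .inr ⟨a, b, closure_sdiff_eq_pair_of_bijOn_Ioo hp ha hb, ?_⟩
  exact (eq_or_ne a b).imp_right fun hab ↦
    ⟨p, injective_of_bijOn_Ioo hp ha hb hab, (range_eq_closure_of_bijOn_Ioo hp).subset⟩

-- The edges other than `e` have both or none of their ends in the set `S` of vertices joined to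
-- `a` off `e`. By parity the same holds for `e`, and `a` is in `S`.
theorem arcJoinedIn_sdiff_edge (hG : IsCompactGraphWith G V)
    (hdeg : ∀ v ∈ V, Even (vertexDegree G V v)) (he : e ∈ graphEdges G V) {a b : X}
    (hab : closure e \ e = {a, b}) : ArcJoinedIn (G \ e) a b := by
  have hfin : {v ∈ V | ArcJoinedIn (G \ e) a v}.Finite := hG.vertex_finite.subset (sep_subset _ _)
  have haV : a ∈ V := hG.closure_edge_sdiff_subset he (hab ▸ mem_insert a {b})
  have heven : Even (∑ v ∈ hfin.toFinset, endMultiplicity e v) := by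
    refine even_sum_endMultiplicity_of_forall_ne hG.edges_finite he
      (fun v hv ↦ hdeg v (hfin.mem_toFinset.1 hv).1) fun e' he' hne ↦ ?_
    rcases hG.isClosed_or_exists_ends he' with hclosed | ⟨c, d, hcd, harc⟩
    · simp [endMultiplicity_eq_zero hclosed]
    have hends : {c, d} ⊆ V := hcd ▸ hG.closure_edge_sdiff_subset he'
    have hjoin : ArcJoinedIn (G \ e) c d := harc.mono (hG.closure_edge_subset_sdiff he he' hne)
    rw [even_sum_endMultiplicity_iff hcd, hfin.mem_toFinset, hfin.mem_toFinset]
    exact ⟨fun hc ↦ ⟨hends (.inr rfl), hc.2.trans hjoin⟩,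
      fun hd ↦ ⟨hends (.inl rfl), hd.2.trans hjoin.symm⟩⟩
  rw [even_sum_endMultiplicity_iff hab, hfin.mem_toFinset, hfin.mem_toFinset] at heven
  exact (heven.1 ⟨haV, .refl _ a⟩).2

end IsCompactGraphWith

theorem IsLemniscateGraphWith.isCompactGraphWith [T2Space X] [CompactSpace X]
    (hG : IsLemniscateGraphWith G V) : IsCompactGraphWith G V where
  isCompact := by
    have hedge : ∀ e ∈ graphEdges G V, IsClosed (e ∪ V) := fun e he ↦ by
      rcases hG.edge_shape e he with hcurve | ⟨-, hends⟩
      · exact hcurve.isCompact.isClosed.union hG.vertex_finite.isClosed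
      · rw [← union_eq_right.2 hends, ← union_assoc, union_sdiff_cancel subset_closure]
        exact isClosed_closure.union hG.vertex_finite.isClosed
    have hcover : G = V ∪ ⋃ e ∈ graphEdges G V, (e ∪ V) := by
      refine Subset.antisymm (fun x hx ↦ ?_) (union_subset hG.vertex_subset (iUnion₂_subset
        fun e he ↦ union_subset ((subset_of_mem_setComponents he).trans sdiff_subset)
          hG.vertex_subset))
      refine (em (x ∈ V)).imp_right fun hxV ↦ mem_iUnion₂.2 ⟨_, ⟨x, ⟨hx, hxV⟩, rfl⟩, .inl ?_⟩
      exact mem_connectedComponentIn ⟨hx, hxV⟩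
    rw [hcover]
    exact (hG.vertex_finite.isClosed.union (hG.edges_finite.isClosed_biUnion hedge)).isCompact
  vertex_finite := hG.vertex_finite
  edges_finite := hG.edges_finite
  edge_shape e he := (hG.edge_shape e he).imp_right And.left

end Graphs

theorem edge_in_jordan_curve_general {X : Type*} [TopologicalSpace X] [T2Space X] {G V : Set X}
    (hG : IsCompactGraphWith G V) (hdeg : ∀ v ∈ V, Even (vertexDegree G V v)) {e : Set X}
    (he : e ∈ graphEdges G V) : ∃ γ, IsJordanCurve γ ∧ e ⊆ γ ∧ γ ⊆ G := by
  rcases hG.edge_shape e he with hcurve | harc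
  · exact ⟨e, hcurve, Subset.rfl, subset_closure.trans (hG.closure_edge_subset he)⟩
  obtain ⟨a, b, p, ha, hb, hp⟩ := hG.exists_path_bijOn he harc
  have hrange : range p = closure e := range_eq_closure_of_bijOn_Ioo hp
  have hpair : closure e \ e = {a, b} := closure_sdiff_eq_pair_of_bijOn_Ioo hp ha hb
  have heG : closure e ⊆ G := hG.closure_edge_subset he
  rcases eq_or_ne a b with rfl | hne
  · refine ⟨range p, isJordanCurve_range_of_injOn_Iio (injOn_Iio_of_bijOn_Ioo hp ha), ?_, ?_⟩
    exacts [hrange ▸ subset_closure, hrange ▸ heG]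
  obtain ⟨q, hq, hqG⟩ := (hG.arcJoinedIn_sdiff_edge hdeg he hpair).symm.resolve_left hne.symm
  refine ⟨range p ∪ range q, isJordanCurve_range_union_range
    (injective_of_bijOn_Ioo hp ha hb hne) hq fun x hx ↦ ?_, ?_, ?_⟩
  · rw [← hpair, ← hrange]
    exact ⟨hx.1, (hqG hx.2).2⟩
  · exact hrange ▸ subset_closure.trans subset_union_left
  · exact union_subset (hrange ▸ heG) (hqG.trans sdiff_subset)

/-- Every edge of a lemniscate graph is contained in a Jordan curve lying in the graph. -/
theorem edge_in_jordan_curve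
    (G V : Set (OnePoint ℂ)) (hG : IsLemniscateGraphWith G V)
    (e : Set (OnePoint ℂ)) (he : e ∈ graphEdges G V) :
    ∃ γ : Set (OnePoint ℂ), IsJordanCurve γ ∧ e ⊆ γ ∧ γ ⊆ G :=
  edge_in_jordan_curve_general hG.isCompactGraphWith hG.degree_even he

end
end

section
/- Let Δ_n := {x ∈ ℝ^{n+1} : x_i ≥ 0 for all i and Σᵢ x_i = 1} be the standard n-simplex, and for each i ∈ {1, …, n+1} let the i-th facet be {x ∈ Δ_n : x_i = 0}. If f : Δ_n → Δ_n is continuous and maps each facet into itself (i.e. for every i and every x ∈ Δ_n with x_i = 0, one has f(x)_i = 0), then f is surjective. -/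
open Set

/-!
Fix a target `y` in the simplex and let `F i` be the closed set of points `x` with `y i ≤ f x i`.
Comparing coordinate sums over the support of `x` shows that every `x` lies in some `F i` with
`x i ≠ 0`, so the Knaster–Kuratowski–Mazurkiewicz lemma gives a point lying in all the `F i`. There
`f x` dominates `y` in every coordinate and has the same coordinate sum, hence `f x = y`.

The KKM lemma rests on Sperner's lemma, and that is proved by a parity count on mod 2 cochains
rather than on triangulations: barycentric subdivision becomes an operator on cochains which
commutes with the coboundary, and the coboundary of the cochain detecting the labels `0, …, k - 1`
is the cochain detecting the labels `0, …, k`.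
-/

section Centroid

variable {ι : Type*} [Fintype ι] [Nonempty ι]

lemma centroid_univ_mem_convexHull {𝕜 E : Type*} [Field 𝕜] [LinearOrder 𝕜] [IsStrictOrderedRing 𝕜]
    [AddCommGroup E] [Module 𝕜 E] (p : ι → E) :
    Finset.univ.centroid 𝕜 p ∈ convexHull 𝕜 (range p) :=
  affineCombination_mem_convexHull (fun _ _ => by simp)
    (Finset.sum_centroidWeights_eq_one_of_nonempty 𝕜 _ Finset.univ_nonempty)

lemma dist_centroid_univ_le {V P : Type*} [SeminormedAddCommGroup V] [NormedSpace ℝ V]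
    [PseudoMetricSpace P] [NormedAddTorsor V P] (p : ι → P) (i : ι) :
    dist (p i) (Finset.univ.centroid ℝ p) ≤
      (1 - (Fintype.card ι : ℝ)⁻¹) * Metric.diam (range p) := by
  classical
  have hdist (j : ι) : dist (p j) (p i) ≤ Metric.diam (range p) :=
    Metric.dist_le_diam_of_mem (finite_range p).isBounded (mem_range_self j) (mem_range_self i)
  have hsum : ∑ j, dist (p j) (p i) ≤ (Fintype.card ι - 1) * Metric.diam (range p) := by
    rw [← Finset.sum_erase (f := fun j => dist (p j) (p i)) Finset.univ (dist_self (p i))]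
    refine (Finset.sum_le_card_nsmul _ _ _ fun j _ => hdist j).trans_eq ?_
    simp [Finset.card_erase_of_mem, Nat.cast_sub Fintype.card_pos]
  have hcentroid : Finset.univ.centroid ℝ p -ᵥ p i =
      (Fintype.card ι : ℝ)⁻¹ • ∑ j, (p j -ᵥ p i) := by
    rw [Finset.centroid_vsub_const ℝ _ Finset.univ_nonempty, Finset.centroid_def,
      Finset.affineCombination_eq_linear_combination _ _ _
        (Finset.sum_centroidWeights_eq_one_of_nonempty ℝ _ Finset.univ_nonempty),
      Finset.smul_sum]
    simp only [Finset.centroidWeights_apply, Finset.card_univ]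
  calc dist (p i) (Finset.univ.centroid ℝ p)
      = (Fintype.card ι : ℝ)⁻¹ * ‖∑ j, (p j -ᵥ p i)‖ := by
        rw [dist_comm, dist_eq_norm_vsub V, hcentroid, norm_smul,
          Real.norm_of_nonneg (by positivity)]
    _ ≤ (Fintype.card ι : ℝ)⁻¹ * ∑ j, dist (p j) (p i) := by
        gcongr
        exact norm_sum_le_of_le _ fun j _ => (dist_eq_norm_vsub V _ _).ge
    _ ≤ (Fintype.card ι : ℝ)⁻¹ * ((Fintype.card ι - 1) * Metric.diam (range p)) := by gcongr
    _ = (1 - (Fintype.card ι : ℝ)⁻¹) * Metric.diam (range p) := by field_simp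

lemma dist_centroid_univ_le_of_mem_convexHull {E : Type*} [SeminormedAddCommGroup E]
    [NormedSpace ℝ E] {p : ι → E} {x : E} (hx : x ∈ convexHull ℝ (range p)) :
    dist x (Finset.univ.centroid ℝ p) ≤
      (1 - (Fintype.card ι : ℝ)⁻¹) * Metric.diam (range p) :=
  convexHull_min (range_subset_iff.mpr (dist_centroid_univ_le p)) (convex_closedBall _ _) hx

end Centroid

lemma diam_insert_le {α : Type*} [PseudoMetricSpace α] {s : Set α} {x : α} {C : ℝ}
    (hs : Bornology.IsBounded s) (hsC : Metric.diam s ≤ C) (hx : ∀ y ∈ s, dist y x ≤ C) :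
    Metric.diam (insert x s) ≤ C := by
  have hC : 0 ≤ C := Metric.diam_nonneg.trans hsC
  refine Metric.diam_le_of_forall_dist_le hC ?_
  rintro y (rfl | hy) z (rfl | hz)
  · rwa [dist_self]
  · rw [dist_comm]
    exact hx z hz
  · exact hx y hy
  · exact (Metric.dist_le_diam_of_mem hs hy hz).trans hsC

/-- Mod 2 cochains on the affine simplices of `E`. A simplex with `k` vertices is encoded as the
`k`-tuple of its vertices, possibly degenerate, and no invariance under reordering is imposed. -/
abbrev SimplexCochain (E : Type*) (k : ℕ) : Type _ := (Fin k → E) → ZMod 2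

namespace SimplexCochain

section Coboundary

variable {E : Type*} {k : ℕ}

/-- The simplicial coboundary: the sum of a cochain over all the facets of a simplex. -/
def coboundary : SimplexCochain E k →ₗ[ZMod 2] SimplexCochain E (k + 1) :=
  ∑ i : Fin (k + 1), LinearMap.funLeft (ZMod 2) (ZMod 2) fun σ => i.removeNth σ

/-- Evaluation of a cochain on the cones with apex `b`: a contracting homotopy for `coboundary`. -/
def contract (b : E) : SimplexCochain E (k + 1) →ₗ[ZMod 2] SimplexCochain E k :=
  LinearMap.funLeft (ZMod 2) (ZMod 2) fun τ => Fin.cons b τ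

lemma coboundary_apply (φ : SimplexCochain E k) (σ : Fin (k + 1) → E) :
    coboundary φ σ = ∑ i : Fin (k + 1), φ (i.removeNth σ) := by
  simp [coboundary, LinearMap.funLeft_apply]

lemma contract_apply (b : E) (φ : SimplexCochain E (k + 1)) (τ : Fin k → E) :
    contract b φ τ = φ (Fin.cons b τ) := rfl

lemma contract_coboundary_zero (b : E) (φ : SimplexCochain E 0) :
    contract b (coboundary φ) = φ := by
  ext τ
  rw [contract_apply, coboundary_apply, Fin.sum_univ_one]
  exact congrArg φ (Subsingleton.elim _ _)

lemma contract_coboundary_succ (b : E) (φ : SimplexCochain E (k + 1)) :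
    contract b (coboundary φ) = φ + coboundary (contract b φ) := by
  ext τ
  have hface (i : Fin (k + 1)) :
      i.succ.removeNth (Fin.cons b τ : Fin (k + 2) → E) = Fin.cons b (i.removeNth τ) := by
    ext j
    cases j using Fin.cases <;> simp [Fin.removeNth]
  simp only [contract_apply, coboundary_apply, Pi.add_apply, Fin.sum_univ_succ (n := k + 1),
    Fin.removeNth_zero, Fin.tail_cons, hface]

lemma eq_zero_of_contract_eq_zero {φ : SimplexCochain E (k + 1)} (h : ∀ b, contract b φ = 0) :
    φ = 0 := by
  ext σ
  rw [← Fin.cons_self_tail σ, ← contract_apply (σ 0) φ, h, Pi.zero_apply, Pi.zero_apply]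

lemma coboundary_coboundary (φ : SimplexCochain E k) : coboundary (coboundary φ) = 0 := by
  induction k with
  | zero =>
    refine eq_zero_of_contract_eq_zero fun b => ?_
    rw [contract_coboundary_succ, contract_coboundary_zero, ZModModule.add_self]
  | succ k ih =>
    refine eq_zero_of_contract_eq_zero fun b => ?_
    rw [contract_coboundary_succ, contract_coboundary_succ, map_add, ih, add_zero,
      ZModModule.add_self]

end Coboundary

section Subdivision

variable {E : Type*} [AddCommGroup E] [Module ℝ E]

/-- The dual of barycentric subdivision: `subdivide φ σ` is the sum of `φ` over the top-dimensional
simplices of the barycentric subdivision of `σ`. These are the cones, with apex the barycenter of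
`σ`, over the simplices of the subdivided facets of `σ`. -/
noncomputable def subdivide : {k : ℕ} → SimplexCochain E k →ₗ[ZMod 2] SimplexCochain E k
  | 0 => LinearMap.id
  | _ + 1 => LinearMap.pi fun σ =>
      LinearMap.proj σ ∘ₗ coboundary ∘ₗ subdivide ∘ₗ contract (Finset.univ.centroid ℝ σ)

lemma subdivide_zero : (subdivide : SimplexCochain E 0 →ₗ[ZMod 2] _) = LinearMap.id := rfl

lemma subdivide_succ_apply {k : ℕ} (φ : SimplexCochain E (k + 1)) (σ : Fin (k + 1) → E) :
    subdivide φ σ = coboundary (subdivide (contract (Finset.univ.centroid ℝ σ) φ)) σ := rfl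

lemma subdivide_coboundary {k : ℕ} (φ : SimplexCochain E k) :
    subdivide (coboundary φ) = coboundary (subdivide φ) := by
  induction k with
  | zero =>
    ext σ
    rw [subdivide_succ_apply, contract_coboundary_zero, subdivide_zero, LinearMap.id_apply]
  | succ k ih =>
    ext σ
    rw [subdivide_succ_apply, contract_coboundary_succ, map_add, ih, map_add,
      coboundary_coboundary, add_zero]

lemma subdivide_pow_coboundary {k : ℕ} (m : ℕ) (φ : SimplexCochain E k) :
    (subdivide ^ m) (coboundary φ) = coboundary ((subdivide ^ m) φ) :=
  LinearMap.congr_fun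
    (Module.End.commute_pow_left_of_commute (LinearMap.ext subdivide_coboundary) m) φ

end Subdivision

section Mesh

variable {E : Type*} [SeminormedAddCommGroup E] [NormedSpace ℝ E] {k : ℕ}

-- The sharp ratio is `(k - 1) / k`; the weaker `k / (k + 1)` is also meaningful for `k = 0`.
lemma exists_ne_zero_of_subdivide_ne_zero {φ : SimplexCochain E k} {σ : Fin k → E}
    (hφ : subdivide φ σ ≠ 0) :
    ∃ τ, φ τ ≠ 0 ∧ range τ ⊆ convexHull ℝ (range σ) ∧
      Metric.diam (range τ) ≤ k / (k + 1) * Metric.diam (range σ) := by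
  induction k with
  | zero => exact ⟨σ, hφ, subset_convexHull ℝ _, by simp [range_eq_empty]⟩
  | succ k ih =>
    rw [subdivide_succ_apply, coboundary_apply] at hφ
    obtain ⟨i, -, hi⟩ := Finset.exists_ne_zero_of_sum_ne_zero hφ
    obtain ⟨τ, hτ, hτ_facet, hτ_diam⟩ := ih hi
    have hfacet : range (i.removeNth σ) ⊆ range σ := range_comp_subset_range i.succAbove σ
    have hτσ : range τ ⊆ convexHull ℝ (range σ) := hτ_facet.trans (convexHull_mono hfacet)
    have hratio : (k : ℝ) / (k + 1) ≤ (k + 1 : ℕ) / ((k + 1 : ℕ) + 1) := by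
      rw [div_le_div_iff₀ (by positivity) (by positivity)]
      push_cast
      linarith
    have hcard : 1 - (Fintype.card (Fin (k + 1)) : ℝ)⁻¹ = k / (k + 1) := by
      rw [Fintype.card_fin, Nat.cast_succ, sub_eq_iff_eq_add, inv_eq_one_div, ← add_div,
        div_self (by positivity)]
    have hcenter : ∀ x ∈ range τ, dist x (Finset.univ.centroid ℝ σ) ≤
        (k + 1 : ℕ) / ((k + 1 : ℕ) + 1) * Metric.diam (range σ) := fun x hx =>
      (dist_centroid_univ_le_of_mem_convexHull (hτσ hx)).trans (by rw [hcard]; gcongr)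
    refine ⟨Fin.cons (Finset.univ.centroid ℝ σ) τ, hτ, ?_, ?_⟩ <;> rw [Fin.range_cons]
    · exact insert_subset (centroid_univ_mem_convexHull σ) hτσ
    · refine diam_insert_le (finite_range τ).isBounded (hτ_diam.trans ?_) hcenter
      gcongr
      exact Metric.diam_mono hfacet (finite_range σ).isBounded

lemma exists_ne_zero_of_subdivide_pow_ne_zero {φ : SimplexCochain E k} {σ : Fin k → E} {m : ℕ}
    (hφ : (subdivide ^ m) φ σ ≠ 0) :
    ∃ τ, φ τ ≠ 0 ∧ range τ ⊆ convexHull ℝ (range σ) ∧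
      Metric.diam (range τ) ≤ (k / (k + 1)) ^ m * Metric.diam (range σ) := by
  induction m generalizing φ with
  | zero => exact ⟨σ, hφ, subset_convexHull ℝ _, by simp⟩
  | succ m ih =>
    rw [pow_succ, Module.End.mul_apply] at hφ
    obtain ⟨ρ, hρ, hρσ, hρ_diam⟩ := ih hφ
    obtain ⟨τ, hτ, hτρ, hτ_diam⟩ := exists_ne_zero_of_subdivide_ne_zero hρ
    refine ⟨τ, hτ, hτρ.trans (convexHull_min hρσ (convex_convexHull ℝ _)), ?_⟩
    calc Metric.diam (range τ) ≤ k / (k + 1) * Metric.diam (range ρ) := hτ_diam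
      _ ≤ k / (k + 1) * ((k / (k + 1)) ^ m * Metric.diam (range σ)) := by gcongr
      _ = (k / (k + 1)) ^ (m + 1) * Metric.diam (range σ) := by ring

lemma subdivide_pow_apply_eq_zero {φ : SimplexCochain E k} {σ : Fin k → E}
    (h : ∀ τ, range τ ⊆ convexHull ℝ (range σ) → φ τ = 0) (m : ℕ) :
    (subdivide ^ m) φ σ = 0 := by
  by_contra hφ
  obtain ⟨τ, hτ, hτσ, -⟩ := exists_ne_zero_of_subdivide_pow_ne_zero hφ
  exact hτ (h τ hτσ)

lemma subdivide_pow_apply_congr {φ ψ : SimplexCochain E k} {σ : Fin k → E}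
    (h : ∀ τ, range τ ⊆ convexHull ℝ (range σ) → φ τ = ψ τ) (m : ℕ) :
    (subdivide ^ m) φ σ = (subdivide ^ m) ψ σ := by
  rw [← sub_eq_zero, ← Pi.sub_apply, ← map_sub]
  exact subdivide_pow_apply_eq_zero (fun τ hτ => sub_eq_zero.mpr (h τ hτ)) m

end Mesh

section Rainbow

variable {E : Type*} {k : ℕ} {L : E → ℕ}

/-- The cochain detecting the simplices whose `k` vertices carry the labels `0, …, k - 1`, each of
them once. The indicator is encoded as a determinant: the label matrix of such a simplex is a
permutation matrix, of determinant `1` mod 2, and otherwise it has a zero column. -/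
def rainbow (L : E → ℕ) : SimplexCochain E k := fun τ =>
  Matrix.det (Matrix.of fun i j : Fin k => if L (τ i) = j then (1 : ZMod 2) else 0)

lemma rainbow_eq_zero {τ : Fin k → E} (j : Fin k) (h : ∀ i, L (τ i) ≠ j) : rainbow L τ = 0 :=
  Matrix.det_eq_zero_of_column_eq_zero j fun i => by simp [h i]

lemma coboundary_rainbow {τ : Fin (k + 1) → E} (h : ∀ i, L (τ i) < k + 1) :
    coboundary (rainbow L) τ = rainbow L τ := by
  let A : Matrix (Fin (k + 1)) (Fin (k + 1)) (ZMod 2) :=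
    Matrix.of fun i j => if L (τ i) = j then 1 else 0
  have hrow (i : Fin (k + 1)) : ∑ j, A i j = 1 := by
    have hA (j : Fin (k + 1)) : A i j = if (⟨L (τ i), h i⟩ : Fin (k + 1)) = j then 1 else 0 := by
      simp [A, Fin.ext_iff]
    simp only [hA, Finset.sum_ite_eq, Finset.mem_univ, if_true]
  -- Adding all the other columns to the last one turns it into a column of ones; expanding along
  -- that column gives the coboundary.
  have hdet : (A.updateCol (Fin.last k) fun _ => 1).det = A.det := by
    simpa [hrow] using Matrix.det_updateCol_sum A (Fin.last k) fun _ => 1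
  have hminor (i : Fin (k + 1)) :
      ((A.updateCol (Fin.last k) fun _ => 1).submatrix i.succAbove (Fin.last k).succAbove).det =
        rainbow L (i.removeNth τ) := by
    rw [Matrix.submatrix_updateCol_succAbove, rainbow]
    congr 1
    ext a b
    rw [Fin.succAbove_last]
    rfl
  change _ = A.det
  rw [← hdet, Matrix.det_succ_column _ (Fin.last k), coboundary_apply]
  refine Finset.sum_congr rfl fun i _ => ?_
  rw [hminor, Matrix.updateCol_self, ZMod.neg_eq_self_mod_two, one_pow, one_mul, one_mul]

end Rainbow

end SimplexCochain

/-- A Sperner labelling of the simplex with vertices `v`: every point of a face is labelled by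
(the index of) a vertex of that face. Labels are natural numbers so that passing to the facet
opposite the last vertex does not change their type. -/
def IsSpernerLabelling {E : Type*} [AddCommGroup E] [Module ℝ E] {k : ℕ} (v : Fin k → E)
    (L : E → ℕ) : Prop :=
  ∀ s : Set (Fin k), MapsTo L (convexHull ℝ (v '' s)) (Fin.val '' s)

namespace IsSpernerLabelling

open SimplexCochain

lemma removeNth_last {E : Type*} [AddCommGroup E] [Module ℝ E] {k : ℕ} {v : Fin (k + 1) → E}
    {L : E → ℕ} (h : IsSpernerLabelling v L) :
    IsSpernerLabelling ((Fin.last k).removeNth v) L := fun s => by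
  have hs := h (Fin.castSucc '' s)
  rw [image_image, image_image] at hs
  rwa [Fin.removeNth_last]

variable {E : Type*} [SeminormedAddCommGroup E] [NormedSpace ℝ E] {k : ℕ} {v : Fin k → E}
  {L : E → ℕ}

/-- Sperner's lemma: the `m`-fold barycentric subdivision of a simplex with a Sperner labelling
has an odd number of simplices carrying all the labels. -/
theorem subdivide_pow_rainbow (h : IsSpernerLabelling v L) (m : ℕ) :
    (subdivide ^ m) (rainbow L) v = 1 := by
  induction k with
  | zero =>
    rw [subdivide_zero, Module.End.id_pow, LinearMap.id_apply, rainbow, Matrix.det_isEmpty]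
  | succ k ih =>
    have hrainbow : ∀ τ : Fin (k + 1) → E, range τ ⊆ convexHull ℝ (range v) →
        rainbow L τ = coboundary (rainbow L) τ := fun τ hτ => by
      refine (coboundary_rainbow fun i => ?_).symm
      rw [← image_univ (f := v)] at hτ
      obtain ⟨j, -, hj⟩ := h univ (hτ (mem_range_self i))
      exact hj ▸ j.isLt
    have hfacet : ∀ i ≠ Fin.last k, (subdivide ^ m) (rainbow L) (i.removeNth v) = 0 := by
      intro i hi
      have hrange : range (i.removeNth v) = v '' {i}ᶜ := by
        rw [← Fin.range_succAbove, ← range_comp]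
        rfl
      refine subdivide_pow_apply_eq_zero (fun τ hτ => ?_) m
      refine rainbow_eq_zero (i.castPred hi) fun a ha => ?_
      obtain ⟨j, hji, hj⟩ := h {i}ᶜ (hrange ▸ hτ (mem_range_self a))
      exact hji (Fin.ext (hj.trans ha))
    rw [subdivide_pow_apply_congr hrainbow, subdivide_pow_coboundary, coboundary_apply,
      Finset.sum_eq_single_of_mem (Fin.last k) (Finset.mem_univ _) fun i _ => hfacet i,
      ih h.removeNth_last]

theorem exists_rainbow_diam_lt (h : IsSpernerLabelling v L) {ε : ℝ} (hε : 0 < ε) :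
    ∃ p : Fin k → E, range p ⊆ convexHull ℝ (range v) ∧ (∀ i, L (p i) = i) ∧
      Metric.diam (range p) < ε := by
  have hmesh : Filter.Tendsto (fun m : ℕ => ((k : ℝ) / (k + 1)) ^ m * Metric.diam (range v))
      Filter.atTop (nhds 0) := by
    have hratio : (k : ℝ) / (k + 1) < 1 := (div_lt_one (by positivity)).mpr (lt_add_one _)
    simpa using (tendsto_pow_atTop_nhds_zero_of_lt_one (by positivity) hratio).mul_const
      (Metric.diam (range v))
  obtain ⟨m, hm⟩ := (hmesh.eventually_lt_const hε).exists
  obtain ⟨τ, hτ, hτv, hτ_diam⟩ := exists_ne_zero_of_subdivide_pow_ne_zero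
    (ne_of_eq_of_ne (h.subdivide_pow_rainbow m) one_ne_zero)
  have hsurj : ∀ j : Fin k, ∃ i, L (τ i) = j := fun j => by
    by_contra! hj
    exact hτ (rainbow_eq_zero j hj)
  choose g hg using hsurj
  have hsub : range (τ ∘ g) ⊆ range τ := range_comp_subset_range g τ
  exact ⟨τ ∘ g, hsub.trans hτv, hg,
    (Metric.diam_mono hsub (finite_range τ).isBounded).trans_lt (hτ_diam.trans_lt hm)⟩

end IsSpernerLabelling

section StdSimplex

variable {ι : Type*}

lemma apply_eq_zero_of_mem_convexHull_single {𝕜 : Type*} [Field 𝕜] [LinearOrder 𝕜]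
    [IsStrictOrderedRing 𝕜] [DecidableEq ι] {s : Set ι} {x : ι → 𝕜}
    (hx : x ∈ convexHull 𝕜 ((fun i => Pi.single i 1) '' s)) {i : ι} (hi : i ∉ s) : x i = 0 := by
  have hsub : (fun j => (Pi.single j 1 : ι → 𝕜)) '' s ⊆ {x | x i = 0} := by
    rintro _ ⟨j, hj, rfl⟩
    exact Pi.single_eq_of_ne (ne_of_mem_of_not_mem hj hi).symm 1
  exact convexHull_min hsub
    (convex_hyperplane (LinearMap.proj (R := 𝕜) (φ := fun _ : ι => 𝕜) i).isLinear 0) hx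

variable [Fintype ι]

lemma isSpernerLabelling_single [DecidableEq ι] {k : ℕ} (e : Fin k ≃ ι) {l : (ι → ℝ) → ι}
    (hl : ∀ x ∈ stdSimplex ℝ ι, x (l x) ≠ 0) :
    IsSpernerLabelling (fun i => Pi.single (e i) 1) fun x => (e.symm (l x) : ℕ) := by
  intro s x hx
  rw [← image_image (fun i => Pi.single i 1) e] at hx
  have hx_mem : x ∈ stdSimplex ℝ ι := convexHull_rangle_single_eq_stdSimplex (R := ℝ) ι ▸
    convexHull_mono (image_subset_range _ _) hx
  have hlx : l x ∈ e '' s := by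
    by_contra hlx
    exact hl x hx_mem (apply_eq_zero_of_mem_convexHull_single hx hlx)
  obtain ⟨i, hi, hil⟩ := hlx
  exact ⟨i, hi, by simp only [← hil, e.symm_apply_apply]⟩

/-- The Knaster–Kuratowski–Mazurkiewicz lemma. Its usual hypothesis, that `⋃ i ∈ s, F i` contains
the face spanned by `s`, is written pointwise, with `s` the support of `x`. -/
theorem kkm_stdSimplex [Nonempty ι] {F : ι → Set (ι → ℝ)} (hclosed : ∀ i, IsClosed (F i))
    (hcover : ∀ x ∈ stdSimplex ℝ ι, ∃ i, x i ≠ 0 ∧ x ∈ F i) :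
    ∃ x ∈ stdSimplex ℝ ι, ∀ i, x ∈ F i := by
  classical
  by_contra! hF
  obtain ⟨δ, hδ, hball⟩ := lebesgue_number_lemma_of_metric (isCompact_stdSimplex ℝ ι)
    (fun i => (hclosed i).isOpen_compl) fun x hx => mem_iUnion.mpr (hF x hx)
  choose! l hl_ne hl_mem using hcover
  let e : Fin (Fintype.card ι) ≃ ι := (Fintype.equivFin ι).symm
  obtain ⟨p, hp, hp_label, hp_diam⟩ :=
    (isSpernerLabelling_single e hl_ne).exists_rainbow_diam_lt hδ
  have hvertices : range (fun i => (Pi.single (e i) 1 : ι → ℝ)) = range fun i => Pi.single i 1 :=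
    e.surjective.range_comp fun i => (Pi.single i 1 : ι → ℝ)
  rw [hvertices, convexHull_rangle_single_eq_stdSimplex] at hp
  have hp_mem (i : ι) : p (e.symm i) ∈ F i := by
    have hli : l (p (e.symm i)) = i := e.symm.injective (Fin.ext (hp_label (e.symm i)))
    simpa only [hli] using hl_mem (p (e.symm i)) (hp (mem_range_self _))
  let j := e.symm (Classical.arbitrary ι)
  obtain ⟨i, hi⟩ := hball (p j) (hp (mem_range_self j))
  refine hi (Metric.mem_ball.mpr ?_) (hp_mem i)
  exact (Metric.dist_le_diam_of_mem (finite_range p).isBounded (mem_range_self _)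
    (mem_range_self j)).trans_lt hp_diam

lemma exists_ne_zero_and_le_of_sum_le {M : Type*} [AddCommMonoid M] [LinearOrder M]
    [IsOrderedCancelAddMonoid M] {x y z : ι → M} (hx : x ≠ 0) (hy : 0 ≤ y)
    (hz : ∀ i, x i = 0 → z i = 0) (hsum : ∑ i, y i ≤ ∑ i, z i) : ∃ i, x i ≠ 0 ∧ y i ≤ z i := by
  classical
  have hsupp : ∑ i with x i ≠ 0, y i ≤ ∑ i with x i ≠ 0, z i :=
    calc ∑ i with x i ≠ 0, y i ≤ ∑ i, y i :=
          Finset.sum_le_sum_of_subset_of_nonneg (Finset.filter_subset _ _) fun i _ _ => hy i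
      _ ≤ ∑ i, z i := hsum
      _ = ∑ i with x i ≠ 0, z i :=
          (Finset.sum_filter_of_ne fun i _ (hzi : z i ≠ 0) => mt (hz i) hzi).symm
  obtain ⟨i, hi⟩ := Function.ne_iff.mp hx
  obtain ⟨j, hj, hle⟩ := Finset.exists_le_of_sum_le ⟨i, by simpa using hi⟩ hsupp
  exact ⟨j, (Finset.mem_filter.mp hj).2, hle⟩

theorem simplex_facet_preserving_surjective_general {f : (ι → ℝ) → ι → ℝ}
    (hsum : ∀ x ∈ stdSimplex ℝ ι, ∑ i, f x i = 1) (hcont : ContinuousOn f (stdSimplex ℝ ι))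
    (hfacet : ∀ i, ∀ x ∈ stdSimplex ℝ ι, x i = 0 → f x i = 0) :
    stdSimplex ℝ ι ⊆ f '' stdSimplex ℝ ι := by
  intro y hy
  have hne (x) (hx : x ∈ stdSimplex ℝ ι) : x ≠ 0 := by
    rintro rfl
    simpa using hx.2
  obtain ⟨i₀, -⟩ := Function.ne_iff.mp (hne y hy)
  have : Nonempty ι := ⟨i₀⟩
  have hclosed (i : ι) : IsClosed (stdSimplex ℝ ι ∩ f ⁻¹' {z | y i ≤ z i}) :=
    hcont.preimage_isClosed_of_isClosed (isClosed_stdSimplex ℝ ι)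
      (isClosed_le continuous_const (continuous_apply i))
  have hcover (x) (hx : x ∈ stdSimplex ℝ ι) :
      ∃ i, x i ≠ 0 ∧ x ∈ stdSimplex ℝ ι ∩ f ⁻¹' {z | y i ≤ z i} := by
    obtain ⟨i, hi, hle⟩ := exists_ne_zero_and_le_of_sum_le (hne x hx) hy.1
      (fun i => hfacet i x hx) (hy.2.trans (hsum x hx).symm).le
    exact ⟨i, hi, hx, hle⟩
  obtain ⟨x, hx, hle⟩ := kkm_stdSimplex hclosed hcover
  have heq : ∀ i ∈ Finset.univ, y i = f x i :=
    (Finset.sum_eq_sum_iff_of_le fun i _ => (hle i).2).mp (hy.2.trans (hsum x hx).symm)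
  exact ⟨x, hx, funext fun i => (heq i (Finset.mem_univ i)).symm⟩

end StdSimplex

/-- A continuous self-map of the standard `n`-simplex that maps each facet
`{x : x_i = 0}` into itself is surjective. -/
theorem simplex_facet_preserving_surjective
    (n : ℕ) (f : (Fin (n + 1) → ℝ) → (Fin (n + 1) → ℝ))
    (hmap : Set.MapsTo f (stdSimplex ℝ (Fin (n + 1))) (stdSimplex ℝ (Fin (n + 1))))
    (hcont : ContinuousOn f (stdSimplex ℝ (Fin (n + 1))))
    (hfacet : ∀ i : Fin (n + 1), ∀ x ∈ stdSimplex ℝ (Fin (n + 1)), x i = 0 → f x i = 0) :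
    stdSimplex ℝ (Fin (n + 1)) ⊆ f '' stdSimplex ℝ (Fin (n + 1)) :=
  simplex_facet_preserving_surjective_general (fun _ hx => (hmap hx).2) hcont hfacet
end

section
/- Let F : [0,1]ⁿ → [0,∞)ⁿ be a continuous map such that for every j ∈ {1, …, n} and every x ∈ [0,1]ⁿ, F_j(x) = 0 if and only if x_j = 0. Then there exists δ > 0 such that every diagonal point (y, y, …, y) ∈ ℝⁿ with 0 ≤ y < δ lies in F([0,1]ⁿ). -/
open Set

/-! Perturbing `F` by the constant `v` turns the conclusion into the Poincaré–Miranda theorem for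
`x ↦ F x - v`, where `δ` is the minimum of the `F_j` over the faces `x_j = 1`.

Poincaré–Miranda is reduced by uniform continuity to a Sperner lemma for labelled grids: some unit
cube must see both labels in every direction. Encode the labels of direction `a` by a function `l a`
with values mod 2. The cup product of the differentials `d(l a)` is supported on the unit cubes
with that property, and it is the exact cochain `d(l a₁ · (d(l a₂) ∪ ⋯))`. Stokes' theorem then
computes its total mass from the boundary values of the labels: only the face `x a₁ = k`
contributes, with the mass of the product in one dimension less. Hence the total mass is `1`.
-/

open scoped fwdDiff

section CubicalCochains

variable {ι κ M R : Type*} [DecidableEq ι] [AddCommMonoid M]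

/-- The coboundary of a cubical cochain mod 2. A cochain `η` assigns the value `η S x` to the cube
with base point `x` and edges `e i`, `i ∈ S`; no signs occur since coefficients will have
characteristic `2`. -/
def coboundary [AddCommGroup R] (e : ι → M) (η : Finset ι → M → R) (S : Finset ι) (x : M) : R :=
  ∑ i ∈ S, Δ_[e i] (η (S.erase i)) x

variable [CommRing R]

/-- The cubical cup product `df ∪ η` of the differential of a function with a cochain. -/
def diffCup (e : ι → M) (f : M → R) (η : Finset ι → M → R) (S : Finset ι) (x : M) : R :=
  ∑ i ∈ S, Δ_[e i] f x * η (S.erase i) (x + e i)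

/-- The cup product of the differentials `d(l a)`, `a ∈ L`, in the order of the list `L`. -/
def iteratedDiffCup (e : ι → M) (l : κ → M → R) : List κ → Finset ι → M → R
  | [] => fun S _ => if S = ∅ then 1 else 0
  | a :: L => diffCup e (l a) (iteratedDiffCup e l L)

theorem coboundary_mul (e : ι → M) (f : M → R) (η : Finset ι → M → R) (S : Finset ι) (x : M) :
    coboundary e (fun T y => f y * η T y) S x = diffCup e f η S x + f x * coboundary e η S x := by
  simp only [coboundary, diffCup, fwdDiff, Finset.mul_sum, ← Finset.sum_add_distrib]
  exact Finset.sum_congr rfl fun i _ => by ring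

/-- `T` encodes the vertex of the cube at which the edge `e i` starts. -/
theorem exists_fwdDiff_ne_zero_of_iteratedDiffCup_ne_zero {e : ι → M} {l : κ → M → R} {L : List κ}
    {S : Finset ι} {x : M} (hne : iteratedDiffCup e l L S x ≠ 0) {a : κ} (ha : a ∈ L) :
    ∃ i ∈ S, ∃ T ⊆ S.erase i, Δ_[e i] (l a) (x + ∑ j ∈ T, e j) ≠ 0 := by
  induction L generalizing S x with
  | nil => simp at ha
  | cons c L ih =>
    obtain ⟨i, hi, hterm⟩ := Finset.exists_ne_zero_of_sum_ne_zero hne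
    rcases List.mem_cons.1 ha with rfl | haL
    · exact ⟨i, hi, ∅, Finset.empty_subset _, by simpa using left_ne_zero_of_mul hterm⟩
    · obtain ⟨m, hm, T, hT, hdiff⟩ := ih (right_ne_zero_of_mul hterm) haL
      obtain ⟨hmi, hmS⟩ := Finset.mem_erase.1 hm
      have hiT : i ∉ T := fun h => by simpa using hT h
      refine ⟨m, hmS, insert i T, Finset.insert_subset (by simp [hmi.symm, hi]) ?_, ?_⟩
      · exact hT.trans (Finset.erase_subset_erase _ (Finset.erase_subset _ _))
      · rwa [Finset.sum_insert hiT, ← add_assoc]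

variable [CharP R 2]

theorem sum_erase_eq_zero_of_symm (S : Finset ι) (h : ι → ι → R) (hsymm : ∀ i j, h i j = h j i) :
    ∑ i ∈ S, ∑ j ∈ S.erase i, h i j = 0 := by
  rw [Finset.sum_sigma']
  refine Finset.sum_involution (fun p _ => ⟨p.2, p.1⟩) (fun p _ => ?_) (fun p hp _ hfix => ?_)
    (fun p hp => ?_) fun _ _ => rfl
  · rw [hsymm p.2 p.1, CharTwo.add_self_eq_zero]
  · exact (Finset.mem_erase.1 (Finset.mem_sigma.1 hp).2).1 (congrArg Sigma.fst hfix)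
  · simp only [Finset.mem_sigma, Finset.mem_erase] at hp ⊢
    exact ⟨hp.2.2, hp.2.1.symm, hp.1⟩

theorem coboundary_coboundary (e : ι → M) (η : Finset ι → M → R) (S : Finset ι) (x : M) :
    coboundary e (coboundary e η) S x = 0 := by
  have hexpand : coboundary e (coboundary e η) S x =
      ∑ i ∈ S, ∑ j ∈ S.erase i, Δ_[e i] (Δ_[e j] (η ((S.erase i).erase j))) x := by
    simp only [coboundary, fwdDiff, Finset.sum_sub_distrib]
  rw [hexpand]
  refine sum_erase_eq_zero_of_symm S _ fun i j => ?_
  simp only [fwdDiff, Finset.erase_right_comm (a := i), add_right_comm x (e i)]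
  ring

theorem coboundary_iteratedDiffCup (e : ι → M) (l : κ → M → R) (L : List κ) :
    coboundary e (iteratedDiffCup e l L) = 0 := by
  induction L with
  | nil => ext S x; simp [coboundary, iteratedDiffCup, fwdDiff]
  | cons a L ih =>
    have hexact : iteratedDiffCup e l (a :: L) =
        coboundary e fun T y => l a y * iteratedDiffCup e l L T y := by
      ext S x
      simp [coboundary_mul, ih, iteratedDiffCup]
    ext S x
    rw [hexact, coboundary_coboundary]
    rfl

theorem iteratedDiffCup_cons_eq_coboundary (e : ι → M) (l : κ → M → R) (a : κ) (L : List κ) :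
    iteratedDiffCup e l (a :: L) =
      coboundary e fun T y => l a y * iteratedDiffCup e l L T y := by
  ext S x
  simp [coboundary_mul, coboundary_iteratedDiffCup, iteratedDiffCup]

end CubicalCochains

section Grid

variable {ι R : Type*} [DecidableEq ι]

/-- The edge in direction `i` of the unit cubes in the grid `ι → ℕ`. -/
abbrev gridEdge (i : ι) : ι → ℕ := Pi.single i 1

theorem sum_gridEdge_apply (T : Finset ι) (i : ι) :
    (∑ j ∈ T, gridEdge j) i = if i ∈ T then 1 else 0 := by
  rw [Finset.sum_apply, Finset.sum_pi_single]

theorem iteratedDiffCup_gridEdge_eq_zero [CommRing R] {l : ι → (ι → ℕ) → R} {L : List ι}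
    {S : Finset ι} {x : ι → ℕ} {i : ι} (hiL : i ∈ L) (hiS : i ∉ S)
    (hconst : ∀ y, y i = x i → l i y = l i x) : iteratedDiffCup gridEdge l L S x = 0 := by
  by_contra hne
  obtain ⟨j, hj, T, hT, hdiff⟩ := exists_fwdDiff_ne_zero_of_iteratedDiffCup_ne_zero hne hiL
  have hij : i ≠ j := fun h => hiS (h ▸ hj)
  have hiT : i ∉ T := fun h => hiS (Finset.mem_of_mem_erase (hT h))
  have hbase : (x + ∑ m ∈ T, gridEdge m) i = x i := by
    rw [Pi.add_apply, sum_gridEdge_apply, if_neg hiT, add_zero]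
  have hstep : (x + ∑ m ∈ T, gridEdge m + gridEdge j) i = x i := by
    rw [Pi.add_apply, hbase, gridEdge, Pi.single_eq_of_ne hij, add_zero]
  exact hdiff (by rw [fwdDiff, hconst _ hbase, hconst _ hstep, sub_self])

variable [Fintype ι]

theorem apply_eq_of_mem_piFinset_update_singleton {s : ι → Finset ℕ} {i : ι} {c : ℕ} {x : ι → ℕ}
    (hx : x ∈ Fintype.piFinset (Function.update s i {c})) : x i = c := by
  simpa using Fintype.mem_piFinset.1 hx i

theorem sum_piFinset_eq_sum_update_singleton [AddCommMonoid R] (s : ι → Finset ℕ) (i : ι)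
    (g : (ι → ℕ) → R) : ∑ x ∈ Fintype.piFinset s, g x =
      ∑ t ∈ s i, ∑ x ∈ Fintype.piFinset (Function.update s i {t}), g x := by
  rw [← Finset.sum_fiberwise_of_maps_to fun x hx => Fintype.mem_piFinset.1 hx i]
  refine Finset.sum_congr rfl fun t ht => ?_
  rw [Fintype.piFinset_update_singleton_eq_filter_piFinset_eq s i ht]

theorem sum_piFinset_update_singleton_add_gridEdge [AddCommMonoid R] (s : ι → Finset ℕ) (i : ι)
    (t : ℕ) (g : (ι → ℕ) → R) :
    ∑ x ∈ Fintype.piFinset (Function.update s i {t}), g (x + gridEdge i) =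
      ∑ x ∈ Fintype.piFinset (Function.update s i {t + 1}), g x := by
  have hmem : ∀ {c d : ℕ} {x : ι → ℕ}, x ∈ Fintype.piFinset (Function.update s i {c}) →
      Function.update x i d ∈ Fintype.piFinset (Function.update s i {d}) := by
    intro c d x hx
    refine Fintype.mem_piFinset.2 fun j => ?_
    rcases eq_or_ne j i with rfl | hji
    · simp
    · simpa [hji] using Fintype.mem_piFinset.1 hx j
  refine Finset.sum_nbij' (Function.update · i (t + 1)) (Function.update · i t)
    (fun _ => hmem) (fun _ => hmem) (fun x hx => ?_) (fun x hx => ?_) fun x hx => ?_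
  · simp [← apply_eq_of_mem_piFinset_update_singleton hx]
  · simp [← apply_eq_of_mem_piFinset_update_singleton hx]
  · congr 1
    ext j
    rcases eq_or_ne j i with rfl | hji
    · simp [apply_eq_of_mem_piFinset_update_singleton hx]
    · simp [hji]

theorem sum_piFinset_fwdDiff_gridEdge [AddCommGroup R] {k : ℕ} {s : ι → Finset ℕ} {i : ι}
    (hs : s i = Finset.range k) (g : (ι → ℕ) → R) :
    ∑ x ∈ Fintype.piFinset s, Δ_[gridEdge i] g x =
      ∑ x ∈ Fintype.piFinset (Function.update s i {k}), g x -
        ∑ x ∈ Fintype.piFinset (Function.update s i {0}), g x := by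
  rw [sum_piFinset_eq_sum_update_singleton s i, hs]
  simp only [fwdDiff, Finset.sum_sub_distrib, sum_piFinset_update_singleton_add_gridEdge]
  rw [← Finset.sum_sub_distrib]
  exact Finset.sum_range_sub
    (fun t => ∑ x ∈ Fintype.piFinset (Function.update s i {t}), g x) k

theorem sum_piFinset_coboundary_gridEdge [AddCommGroup R] {k : ℕ} {s : ι → Finset ℕ}
    {S : Finset ι} (hs : ∀ i ∈ S, s i = Finset.range k) (η : Finset ι → (ι → ℕ) → R) :
    ∑ x ∈ Fintype.piFinset s, coboundary gridEdge η S x =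
      ∑ i ∈ S, (∑ x ∈ Fintype.piFinset (Function.update s i {k}), η (S.erase i) x -
        ∑ x ∈ Fintype.piFinset (Function.update s i {0}), η (S.erase i) x) := by
  simp only [coboundary]
  rw [Finset.sum_comm]
  exact Finset.sum_congr rfl fun i hi => sum_piFinset_fwdDiff_gridEdge (hs i hi) _

theorem sum_face_mul_iteratedDiffCup_eq_zero [CommRing R] {l : ι → (ι → ℕ) → R} {L : List ι}
    {S : Finset ι} {i : ι} (hiL : i ∈ L) (hiS : i ∉ S) {c : ℕ} {v : R}
    (hconst : ∀ x, x i = c → l i x = v) {s : ι → Finset ℕ} {f : (ι → ℕ) → R} :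
    ∑ x ∈ Fintype.piFinset (Function.update s i {c}),
      f x * iteratedDiffCup gridEdge l L S x = 0 := by
  refine Finset.sum_eq_zero fun x hx => ?_
  have hxi := apply_eq_of_mem_piFinset_update_singleton hx
  rw [iteratedDiffCup_gridEdge_eq_zero hiL hiS fun y hy => ?_, mul_zero]
  rw [hconst y (hy.trans hxi), hconst x hxi]

/-- In the directions outside `L` the box consists of one layer, so that the lower-dimensional
faces met in the induction on `L` are boxes of the same grid. -/
theorem sum_piFinset_iteratedDiffCup_eq_one [CommRing R] [CharP R 2] {k : ℕ}
    {l : ι → (ι → ℕ) → R} (hl₀ : ∀ a x, x a = 0 → l a x = 0) (hl₁ : ∀ a x, x a = k → l a x = 1)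
    {L : List ι} (hL : L.Nodup) {s : ι → Finset ℕ} (hs : ∀ i ∈ L, s i = Finset.range k)
    (hs' : ∀ i ∉ L, (s i).card = 1) :
    ∑ x ∈ Fintype.piFinset s, iteratedDiffCup gridEdge l L L.toFinset x = 1 := by
  induction L generalizing s with
  | nil =>
    have hcard : (Fintype.piFinset s).card = 1 := by
      rw [Fintype.card_piFinset, Finset.prod_eq_one fun i _ => hs' i List.not_mem_nil]
    simp [iteratedDiffCup, hcard]
  | cons a L ih =>
    obtain ⟨haL, hLnodup⟩ := List.nodup_cons.1 hL
    rw [iteratedDiffCup_cons_eq_coboundary,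
      sum_piFinset_coboundary_gridEdge fun i hi => hs i (List.mem_toFinset.1 hi),
      Finset.sum_eq_single_of_mem a (by simp)]
    · have herase : (a :: L).toFinset.erase a = L.toFinset := by
        rw [List.toFinset_cons, Finset.erase_insert (by simpa using haL)]
      have hlower : ∑ x ∈ Fintype.piFinset (Function.update s a {0}),
          l a x * iteratedDiffCup gridEdge l L L.toFinset x = 0 :=
        Finset.sum_eq_zero fun x hx => by
          rw [hl₀ a x (apply_eq_of_mem_piFinset_update_singleton hx), zero_mul]
      have hupper : ∑ x ∈ Fintype.piFinset (Function.update s a {k}),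
          l a x * iteratedDiffCup gridEdge l L L.toFinset x = 1 := by
        rw [← ih hLnodup (s := Function.update s a {k})]
        · exact Finset.sum_congr rfl fun x hx => by
            rw [hl₁ a x (apply_eq_of_mem_piFinset_update_singleton hx), one_mul]
        · intro i hi
          rw [Function.update_of_ne (ne_of_mem_of_not_mem hi haL), hs i (List.mem_cons_of_mem a hi)]
        · intro i hi
          rcases eq_or_ne i a with rfl | hia
          · simp
          · rw [Function.update_of_ne hia, hs' i (by simp [hia, hi])]
      rw [herase, hlower, hupper, sub_zero]
    · intro i hi hia
      have hiL : i ∈ L := by simpa [hia] using hi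
      have hi_notMem := Finset.notMem_erase i (a :: L).toFinset
      rw [sum_face_mul_iteratedDiffCup_eq_zero hiL hi_notMem (hl₁ i),
        sum_face_mul_iteratedDiffCup_eq_zero hiL hi_notMem (hl₀ i), sub_zero]

end Grid

theorem exists_unit_cube_both_labels {ι : Type*} [Finite ι] {k : ℕ} {P : ι → (ι → ℕ) → Prop}
    (hP₀ : ∀ a x, x a = 0 → ¬P a x) (hP₁ : ∀ a x, x a = k → P a x) :
    ∃ x : ι → ℕ, (∀ i, x i < k) ∧
      ∀ a, (∃ y ∈ Icc x (x + 1), ¬P a y) ∧ ∃ y ∈ Icc x (x + 1), P a y := by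
  classical
  cases nonempty_fintype ι
  let l : ι → (ι → ℕ) → ZMod 2 := fun a x => if P a x then 1 else 0
  have hsum : ∑ x ∈ Fintype.piFinset fun _ : ι => Finset.range k,
      iteratedDiffCup gridEdge l Finset.univ.toList Finset.univ.toList.toFinset x = 1 :=
    sum_piFinset_iteratedDiffCup_eq_one (fun a x h => if_neg (hP₀ a x h))
      (fun a x h => if_pos (hP₁ a x h)) (Finset.nodup_toList _) (fun _ _ => rfl)
      fun i hi => absurd (Finset.mem_toList.2 (Finset.mem_univ i)) hi
  obtain ⟨x, hx, hne⟩ := Finset.exists_ne_zero_of_sum_ne_zero (hsum ▸ one_ne_zero)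
  refine ⟨x, fun i => Finset.mem_range.1 (Fintype.mem_piFinset.1 hx i), fun a => ?_⟩
  obtain ⟨i, -, T, hT, hdiff⟩ := exists_fwdDiff_ne_zero_of_iteratedDiffCup_ne_zero hne
    (Finset.mem_toList.2 (Finset.mem_univ a))
  have hiT : i ∉ T := fun h => by simpa using hT h
  have hvertex : ∀ T : Finset ι, x + ∑ j ∈ T, gridEdge j ∈ Icc x (x + 1) := by
    refine fun T => ⟨le_self_add, add_le_add_right (fun j => ?_) x⟩
    rw [sum_gridEdge_apply]
    split_ifs <;> simp
  have hstart := hvertex T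
  have hend := hvertex (insert i T)
  rw [Finset.sum_insert hiT, add_comm (gridEdge i), ← add_assoc] at hend
  by_cases hPstart : P a (x + ∑ j ∈ T, gridEdge j) <;>
    by_cases hPend : P a (x + ∑ j ∈ T, gridEdge j + gridEdge i)
  · simp [fwdDiff, l, hPstart, hPend] at hdiff
  · exact ⟨⟨_, hend, hPend⟩, ⟨_, hstart, hPstart⟩⟩
  · exact ⟨⟨_, hstart, hPstart⟩, ⟨_, hend, hPend⟩⟩
  · simp [fwdDiff, l, hPstart, hPend] at hdiff

section PoincareMiranda

variable {ι : Type*}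

theorem exists_eq_zero_of_forall_exists_dist_lt [Finite ι] {X : Type*} [PseudoMetricSpace X]
    {K : Set X} (hK : IsCompact K) {G : X → ι → ℝ} (hG : ContinuousOn G K)
    (happrox : ∀ ε > 0, ∃ x ∈ K, ∀ a, (∃ y ∈ K, dist y x < ε ∧ G y a ≤ 0) ∧
      ∃ y ∈ K, dist y x < ε ∧ 0 ≤ G y a) :
    ∃ x ∈ K, G x = 0 := by
  cases nonempty_fintype ι
  by_contra! hne
  obtain ⟨m, hm, hmin⟩ := hK.exists_forall_le' hG.norm fun x hx => norm_pos_iff.2 (hne x hx)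
  obtain ⟨ε, hε, hunif⟩ :=
    Metric.uniformContinuousOn_iff.1 (hK.uniformContinuousOn_of_continuous hG) m hm
  obtain ⟨x, hx, hsign⟩ := happrox ε hε
  refine (hmin x hx).not_gt ((pi_norm_lt_iff hm).2 fun a => ?_)
  have hclose : ∀ y ∈ K, dist y x < ε → |G y a - G x a| < m := fun y hy hyx =>
    (dist_le_pi_dist (G y) (G x) a).trans_lt (hunif y hy x hx hyx)
  obtain ⟨⟨y, hy, hyx, hGy⟩, z, hz, hzx, hGz⟩ := hsign a
  rw [Real.norm_eq_abs, abs_lt]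
  constructor
  · linarith [(abs_lt.1 (hclose z hz hzx)).2]
  · linarith [(abs_lt.1 (hclose y hy hyx)).1]

/-- The point of `[0,1]^ι` at position `x` of the grid of mesh `1 / k`. -/
noncomputable def gridPoint (k : ℕ) (x : ι → ℕ) : ι → ℝ := fun i => x i / k

theorem gridPoint_mem_Icc {k : ℕ} {x : ι → ℕ} (hx : ∀ i, x i ≤ k) : gridPoint k x ∈ Icc 0 1 :=
  ⟨fun i => by simp only [gridPoint, Pi.zero_apply]; positivity,
    fun i => div_le_one_of_le₀ (Nat.cast_le.2 (hx i)) k.cast_nonneg⟩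

theorem dist_gridPoint_le [Fintype ι] (k : ℕ) {x y : ι → ℕ} (hy : y ∈ Icc x (x + 1)) :
    dist (gridPoint k y) (gridPoint k x) ≤ 1 / k := by
  refine (dist_pi_le_iff (by positivity)).2 fun i => ?_
  have hlow : (x i : ℝ) ≤ y i := Nat.cast_le.2 (hy.1 i)
  have hup : (y i : ℝ) ≤ x i + 1 := by exact_mod_cast hy.2 i
  rw [Real.dist_eq, gridPoint, gridPoint, ← sub_div, abs_of_nonneg (by bound)]
  gcongr
  linarith

theorem exists_gridPoint_both_signs [Finite ι] {G : (ι → ℝ) → ι → ℝ}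
    (hG₀ : ∀ x ∈ Icc (0 : ι → ℝ) 1, ∀ j, x j = 0 → G x j ≤ 0)
    (hG₁ : ∀ x ∈ Icc (0 : ι → ℝ) 1, ∀ j, x j = 1 → 0 ≤ G x j) {k : ℕ} (hk : k ≠ 0) :
    ∃ x : ι → ℕ, (∀ i, x i < k) ∧ ∀ a, (∃ y ∈ Icc x (x + 1), G (gridPoint k y) a ≤ 0) ∧
      ∃ y ∈ Icc x (x + 1), 0 ≤ G (gridPoint k y) a := by
  classical
  -- The labels are prescribed on the faces, where the sign of `G` is ambiguous at its zeros.
  obtain ⟨x, hxk, hlabels⟩ := exists_unit_cube_both_labels (k := k)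
    (P := fun a x => x a ≠ 0 ∧ (x a = k ∨ 0 < G (gridPoint k x) a))
    (fun a x h hP => hP.1 h) fun a x h => ⟨h ▸ hk, Or.inl h⟩
  have hmem : ∀ y ∈ Icc x (x + 1), gridPoint k y ∈ Icc 0 1 := fun y hy =>
    gridPoint_mem_Icc fun i => (hy.2 i).trans (hxk i)
  refine ⟨x, hxk, fun a => ?_⟩
  obtain ⟨⟨y, hy, hyP⟩, z, hz, -, hzP⟩ := hlabels a
  refine ⟨⟨y, hy, ?_⟩, ⟨z, hz, ?_⟩⟩
  · by_cases hya : y a = 0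
    · exact hG₀ _ (hmem y hy) a (by simp [gridPoint, hya])
    · exact not_lt.1 fun hpos => hyP ⟨hya, Or.inr hpos⟩
  · rcases hzP with hza | hpos
    · exact hG₁ _ (hmem z hz) a (by simp [gridPoint, hza, hk])
    · exact hpos.le

theorem poincare_miranda [Finite ι] {G : (ι → ℝ) → ι → ℝ}
    (hG : ContinuousOn G (Icc (0 : ι → ℝ) 1))
    (hG₀ : ∀ x ∈ Icc (0 : ι → ℝ) 1, ∀ j, x j = 0 → G x j ≤ 0)
    (hG₁ : ∀ x ∈ Icc (0 : ι → ℝ) 1, ∀ j, x j = 1 → 0 ≤ G x j) :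
    ∃ x ∈ Icc (0 : ι → ℝ) 1, G x = 0 := by
  cases nonempty_fintype ι
  refine exists_eq_zero_of_forall_exists_dist_lt isCompact_Icc hG fun ε hε => ?_
  obtain ⟨n, hn⟩ := exists_nat_one_div_lt hε
  obtain ⟨x, hxk, hsign⟩ := exists_gridPoint_both_signs hG₀ hG₁ n.succ_ne_zero
  have hnear : ∀ y ∈ Icc x (x + 1), gridPoint (n + 1) y ∈ Icc 0 1 ∧
      dist (gridPoint (n + 1) y) (gridPoint (n + 1) x) < ε := fun y hy =>
    ⟨gridPoint_mem_Icc fun i => (hy.2 i).trans (hxk i),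
      (dist_gridPoint_le (n + 1) hy).trans_lt (by exact_mod_cast hn)⟩
  refine ⟨gridPoint (n + 1) x, (hnear x ⟨le_rfl, le_self_add⟩).1, fun a => ?_⟩
  obtain ⟨⟨y, hy, hGy⟩, z, hz, hGz⟩ := hsign a
  exact ⟨⟨_, (hnear y hy).1, (hnear y hy).2, hGy⟩, ⟨_, (hnear z hz).1, (hnear z hz).2, hGz⟩⟩

end PoincareMiranda

theorem exists_pos_forall_le_of_isCompact {ι X : Type*} [Finite ι] [TopologicalSpace X]
    {K : ι → Set X} (hK : ∀ j, IsCompact (K j)) {f : ι → X → ℝ}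
    (hf : ∀ j, ContinuousOn (f j) (K j)) (hpos : ∀ j, ∀ x ∈ K j, 0 < f j x) :
    ∃ δ > 0, ∀ j, ∀ x ∈ K j, δ ≤ f j x := by
  choose ε hε hle using fun j => (hK j).exists_forall_le' (hf j) (hpos j)
  obtain ⟨⟨δ, hδ⟩, hδε⟩ := Finite.exists_ge fun j => (⟨ε j, hε j⟩ : Ioi (0 : ℝ))
  exact ⟨δ, hδ, fun j x hx => (Subtype.coe_le_coe.2 (hδε j)).trans (hle j x hx)⟩

theorem cube_image_contains_diagonal_general {ι : Type*} [Finite ι] {F : (ι → ℝ) → ι → ℝ}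
    (hF : ContinuousOn F (Icc (0 : ι → ℝ) 1))
    (hF₀ : ∀ x ∈ Icc (0 : ι → ℝ) 1, ∀ j, x j = 0 → F x j ≤ 0)
    (hF₁ : ∀ x ∈ Icc (0 : ι → ℝ) 1, ∀ j, x j = 1 → 0 < F x j) :
    ∃ δ > 0, Icc 0 (fun _ => δ) ⊆ F '' Icc (0 : ι → ℝ) 1 := by
  have hface : ∀ j, IsCompact (Icc (0 : ι → ℝ) 1 ∩ {x | x j = 1}) := fun j =>
    isCompact_Icc.inter_right (isClosed_eq (continuous_apply j) continuous_const)
  obtain ⟨δ, hδ, hle⟩ := exists_pos_forall_le_of_isCompact hface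
    (fun j => ((continuous_apply j).comp_continuousOn hF).mono inter_subset_left)
    fun j x hx => hF₁ x hx.1 j hx.2
  refine ⟨δ, hδ, fun v hv => ?_⟩
  obtain ⟨x, hx, hzero⟩ := poincare_miranda (hF.sub (continuousOn_const (c := v)))
    (fun x hx j hxj => sub_nonpos.2 ((hF₀ x hx j hxj).trans (hv.1 j)))
    fun x hx j hxj => sub_nonneg.2 ((hv.2 j).trans (hle j x ⟨hx, hxj⟩))
  exact ⟨x, hx, sub_eq_zero.1 hzero⟩

/-- If `F : [0,1]ⁿ → [0,∞)ⁿ` is continuous and `F_j(x) = 0` exactly when `x_j = 0`,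
then the image of `F` contains a diagonal segment `{(y,…,y) : 0 ≤ y < δ}`. -/
theorem cube_image_contains_diagonal
    (n : ℕ) (F : (Fin n → ℝ) → (Fin n → ℝ))
    (hcont : ContinuousOn F (Set.Icc (0 : Fin n → ℝ) 1))
    (hnonneg : ∀ x ∈ Set.Icc (0 : Fin n → ℝ) 1, ∀ j, 0 ≤ F x j)
    (hzero : ∀ x ∈ Set.Icc (0 : Fin n → ℝ) 1, ∀ j, F x j = 0 ↔ x j = 0) :
    ∃ δ > 0, ∀ y : ℝ, 0 ≤ y → y < δ →
      (fun _ : Fin n => y) ∈ F '' Set.Icc (0 : Fin n → ℝ) 1 := by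
  obtain ⟨δ, hδ, hsub⟩ := cube_image_contains_diagonal_general hcont
    (fun x hx j hxj => ((hzero x hx j).2 hxj).le) fun x hx j hxj =>
      (hnonneg x hx j).lt_of_ne' fun h => one_ne_zero (hxj.symm.trans ((hzero x hx j).1 h))
  exact ⟨δ, hδ, fun y hy hyδ => hsub ⟨fun _ => hy, fun _ => hyδ.le⟩⟩
end
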